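/- Suppose g(r) = o(r^{-c}) as r → ∞ for some c > 3d, and fix γ > (c − 3d)/(c − d). Let δ_n denote the minimum vertex degree of G_n(r̂_n(γ)). Then almost surely, limsup_{n→∞} δ_n/(log n) ≤ γ·H₋⁻¹((c − 3d)/(γ(c − d))). -/

import Mathlib

open MeasureTheory ProbabilityTheory Filter Set

noncomputable section

namespace RCM

/-- The toroidal metric on the unit cube. -/
def torusDist {d : ℕ} (x y : EuclideanSpace ℝ (Fin d)) : ℝ :=
  ⨅ z : Fin d → ℤ, ‖x - y - (WithLp.equiv 2 (Fin d → ℝ)).symm (fun i => (z i : ℝ))‖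

/-- The half-open unit cube `S = (-1/2, 1/2]^d`. -/
def cube (d : ℕ) : Set (EuclideanSpace ℝ (Fin d)) :=
  {x | ∀ i, x i ∈ Set.Ioc (-(1/2) : ℝ) (1/2)}

/-- The random connection model: i.i.d. uniform points `X`, coupled Poisson counts `N`,
i.i.d. uniform edge variables `U`, with the three families mutually independent, and a
non-increasing connection function `g : [0,∞) → [0,1]` with finite positive integral `α`. -/
structure Model (d : ℕ) {Ω : Type*} [MeasurableSpace Ω] (P : Measure Ω) where
  g : ℝ → ℝ
  α : ℝ
  X : ℕ → Ω → EuclideanSpace ℝ (Fin d)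
  N : ℕ → Ω → ℕ
  U : ℕ → ℕ → Ω → ℝ
  g_antitone : AntitoneOn g (Set.Ici 0)
  g_mem : ∀ r : ℝ, 0 ≤ r → g r ∈ Set.Icc (0 : ℝ) 1
  g_integrable : MeasureTheory.Integrable (fun x : EuclideanSpace ℝ (Fin d) => g ‖x‖)
  α_def : α = ∫ x : EuclideanSpace ℝ (Fin d), g ‖x‖
  α_pos : 0 < α
  X_meas : ∀ i, Measurable (X i)
  X_unif : ∀ i : ℕ, 1 ≤ i → Measure.map (X i) P = volume.restrict (cube d)
  X_indep : iIndepFun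
    (fun i : {i : ℕ // 1 ≤ i} => X i) P
  N_meas : ∀ n, Measurable (N n)
  N_mono : ∀ ω, Monotone fun n => N n ω
  N_poisson : ∀ n k : ℕ,
    P {ω | N n ω = k} = ENNReal.ofReal (Real.exp (-(n : ℝ)) * (n : ℝ) ^ k / k.factorial)
  U_meas : ∀ i j, Measurable (U i j)
  U_unif : ∀ i j : ℕ, 1 ≤ i → i < j →
    Measure.map (U i j) P = volume.restrict (Set.Icc (0 : ℝ) 1)
  U_indep : iIndepFun
    (fun p : {p : ℕ × ℕ // 1 ≤ p.1 ∧ p.1 < p.2} => U p.1.1 p.1.2) P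
  families_indep : iIndep
    (![MeasurableSpace.comap (fun ω => fun i : ℕ => X i ω) inferInstance,
       MeasurableSpace.comap (fun ω => fun n : ℕ => N n ω) inferInstance,
       MeasurableSpace.comap (fun ω => fun p : ℕ × ℕ => U p.1 p.2 ω) inferInstance]) P

variable {d : ℕ} {Ω : Type*} [MeasurableSpace Ω] {P : Measure Ω}

/-- Adjacency in the graph `G_n(r)`: vertices `1 ≤ i,j ≤ N_n` are joined iff
`U_{ij} ≤ g(dist(X_i,X_j)/r)`. -/
def adj (M : Model d P) (n : ℕ) (r : ℝ) (ω : Ω) (i j : ℕ) : Prop :=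
  i ≠ j ∧ 1 ≤ i ∧ 1 ≤ j ∧ i ≤ M.N n ω ∧ j ≤ M.N n ω ∧
    M.U (min i j) (max i j) ω ≤ M.g (torusDist (M.X i ω) (M.X j ω) / r)

/-- The degree of vertex `i` in `G_n(r)`. -/
def deg (M : Model d P) (n : ℕ) (r : ℝ) (ω : Ω) (i : ℕ) : ℕ :=
  {j : ℕ | adj M n r ω i j}.ncard

/-- `W_n(r)`, the number of isolated vertices of `G_n(r)`. -/
def isolatedCount (M : Model d P) (n : ℕ) (r : ℝ) (ω : Ω) : ℕ :=
  {i : ℕ | 1 ≤ i ∧ i ≤ M.N n ω ∧ deg M n r ω i = 0}.ncard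


/-- `r̂_n(γ)` defined by `r̂_n(γ)^d = γ log n / (α n)`. -/
def rhat (M : Model d P) (γ : ℝ) (n : ℕ) : ℝ :=
  (γ * Real.log n / (M.α * n)) ^ ((1 : ℝ) / d)

/-- `d_n`, the critical parameter for absence of isolated nodes. -/
def critRadius (M : Model d P) (n : ℕ) (ω : Ω) : ℝ :=
  sInf {r : ℝ | 0 < r ∧ isolatedCount M n r ω = 0}

/-- The maximum vertex degree `Δ_n` of `G_n(r)`. -/
def maxDeg (M : Model d P) (n : ℕ) (r : ℝ) (ω : Ω) : ℕ :=
  (Finset.Icc 1 (M.N n ω)).sup (deg M n r ω)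

/-- The minimum vertex degree `δ_n` of `G_n(r)`. -/
def minDeg (M : Model d P) (n : ℕ) (r : ℝ) (ω : Ω) : ℕ :=
  sInf {k : ℕ | ∃ i, 1 ≤ i ∧ i ≤ M.N n ω ∧ deg M n r ω i = k}

/-- The length (toroidal metric) of the longest edge of `G_n(r)` (`0` if there are no edges). -/
def longestEdge (M : Model d P) (n : ℕ) (r : ℝ) (ω : Ω) : ℝ :=
  sSup ({0} ∪ {t : ℝ | ∃ i j, adj M n r ω i j ∧ t = torusDist (M.X i ω) (M.X j ω)})

/-- Connectivity of `G_n(r)`: any two vertices are joined by a path. -/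
def connectedGraph (M : Model d P) (n : ℕ) (r : ℝ) (ω : Ω) : Prop :=
  ∀ i j : ℕ, 1 ≤ i → i ≤ M.N n ω → 1 ≤ j → j ≤ M.N n ω →
    Relation.ReflTransGen (adj M n r ω) i j

/-- `H(x) = 1 - x + x log x` (with `H(0) = 1`, since `log 0 = 0` in Lean). -/
def H (x : ℝ) : ℝ := 1 - x + x * Real.log x

/-- The inverse of the restriction of `H` to `[1, ∞)`. -/
def Hplusinv (y : ℝ) : ℝ := sInf {x : ℝ | 1 ≤ x ∧ y ≤ H x}

/-- The inverse of the restriction of `H` to `[0, 1]`. -/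
def Hminusinv (y : ℝ) : ℝ := sInf {x : ℝ | 0 ≤ x ∧ H x ≤ y}

/-- The standard normal distribution function. -/
def stdNormalCDF (x : ℝ) : ℝ :=
  ∫ t in Set.Iic x, Real.exp (-t ^ 2 / 2) / Real.sqrt (2 * Real.pi)

/-!
The minimum degree is at most the degree of any one vertex with few neighbours among the first `m`
labels, so it suffices to find such a vertex among the first `n / 2` labels.  This is done by the
second moment method.  The probability that a vertex has at most `κ log n` neighbours is a binomial
lower tail, hence `n ^ (-γ H(κ / γ))` up to lower order.  Given the positions of two vertices, the
numbers of neighbours that each has but the other has not are negatively correlated, so their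
low-degree events decorrelate unless they share a neighbour.  For vertices at distance at least
`R = r n ^ (1 / (c + d))` sharing is unlikely by the decay of `g`, and closer pairs are rare because
the ball of radius `R` is small; both errors are of order `n ^ (-c / (c + d))` up to logarithms.
Hence a low-degree vertex exists, except with probability `O(n ^ (-δ))`, whenever
`γ H(κ / γ) < c / (c + d)`, which is weaker than `γ H(κ / γ) < (c - 3 d) / (c - d)`.  Borel-Cantelli
along the powers `n = k ^ b` with `b δ > 1`, monotonicity of the graph in the radius between
consecutive powers, and Poisson concentration of the number of vertices give the almost sure bound.
-/

section Counting

variable {ι F : Type*}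

open Classical in
/-- The number of indices `k ∈ s` whose mark `v k` lies in `A`. -/
def markCount (s : Finset ι) (A : Set F) (v : ι → F) : ℕ := (s.filter fun k => v k ∈ A).card

lemma markCount_empty (A : Set F) (v : ι → F) : markCount ∅ A v = 0 := by
  simp only [markCount, Finset.filter_empty, Finset.card_empty]

lemma markCount_mono {s t : Finset ι} {A B : Set F} (hst : s ⊆ t) (hAB : A ⊆ B) (v : ι → F) :
    markCount s A v ≤ markCount t B v :=
  Finset.card_le_card fun k hk => by
    simp only [Finset.mem_filter] at hk ⊢
    exact ⟨hst hk.1, hAB hk.2⟩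

lemma markCount_insert_lt_iff [DecidableEq ι] {s : Finset ι} {k : ι} (hk : k ∉ s) (A : Set F)
    (v : ι → F) (a : ℕ) :
    markCount (insert k s) A v < a ↔
      (markCount s A v < a ∧ v k ∉ A) ∨ (markCount s A v < a - 1 ∧ v k ∈ A) := by
  classical
  unfold markCount
  rw [Finset.filter_insert]
  by_cases h : v k ∈ A
  · rw [if_pos h, Finset.card_insert_of_notMem (by simp [hk])]
    simp only [h, not_true, and_false, and_true, false_or]
    omega
  · simp [h]

lemma markCount_lt_or_exists_mem_inter {s : Finset ι} {A B : Set F} {v : ι → F} {a : ℕ}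
    (h : markCount s (A \ B) v < a) : markCount s A v < a ∨ ∃ k ∈ s, v k ∈ A ∩ B := by
  by_contra! hc
  refine absurd h (not_lt.2 (hc.1.trans (Finset.card_le_card fun k hk => ?_)))
  simp only [Finset.mem_filter] at hk ⊢
  exact ⟨hk.1, hk.2, fun hB => hc.2 k hk.1 ⟨hk.2, hB⟩⟩

lemma markCount_univ_subtype (s : Finset ι) (A : Set F) (v : ι → F) :
    markCount Finset.univ A (fun k : s => v k) = markCount s A v := by
  unfold markCount
  rw [Finset.card_filter, Finset.card_filter, ← Finset.sum_coe_sort s]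

variable {ξ : ι → Ω → F}

lemma measure_markCount_sdiff_lt_le {A B : Set F} {s : Finset ι} {ε : ENNReal}
    (hε : ∀ k ∈ s, P (ξ k ⁻¹' (A ∩ B)) ≤ ε) (a : ℕ) :
    P {ω | markCount s (A \ B) (fun k => ξ k ω) < a} ≤
      P {ω | markCount s A (fun k => ξ k ω) < a} + s.card * ε := by
  have hsub : {ω | markCount s (A \ B) (fun k => ξ k ω) < a} ⊆
      {ω | markCount s A (fun k => ξ k ω) < a} ∪ ⋃ k ∈ s, ξ k ⁻¹' (A ∩ B) := by
    intro ω hω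
    rcases markCount_lt_or_exists_mem_inter hω with h | ⟨k, hk, h⟩
    · exact Or.inl h
    · exact Or.inr (Set.mem_biUnion hk h)
  calc P {ω | markCount s (A \ B) (fun k => ξ k ω) < a}
      ≤ P {ω | markCount s A (fun k => ξ k ω) < a} + P (⋃ k ∈ s, ξ k ⁻¹' (A ∩ B)) :=
        (measure_mono hsub).trans (measure_union_le _ _)
    _ ≤ P {ω | markCount s A (fun k => ξ k ω) < a} + ∑ _k ∈ s, ε := by
        gcongr
        exact (measure_biUnion_finset_le s _).trans (Finset.sum_le_sum hε)
    _ = P {ω | markCount s A (fun k => ξ k ω) < a} + s.card * ε := by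
        rw [Finset.sum_const, nsmul_eq_mul]

lemma measureReal_markCount_lt_mono (s : Finset ι) (A : Set F) {a b : ℕ} (hab : a ≤ b)
    [IsFiniteMeasure P] :
    P.real {ω | markCount s A (fun l => ξ l ω) < a} ≤
      P.real {ω | markCount s A (fun l => ξ l ω) < b} :=
  measureReal_mono fun _ hω => lt_of_lt_of_le hω hab

variable [MeasurableSpace F]

lemma measurable_markCount_prod {E : Type*} [MeasurableSpace E] (s : Finset ι) {A : E → Set F}
    (hA : MeasurableSet {q : E × F | q.2 ∈ A q.1}) :
    Measurable fun q : E × (ι → F) => markCount s (A q.1) q.2 := by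
  simp only [markCount, Finset.card_filter]
  exact Finset.measurable_sum _ fun k _ =>
    Measurable.ite ((by fun_prop : Measurable fun q : E × (ι → F) => (q.1, q.2 k)) hA)
      measurable_const measurable_const

lemma measurable_markCount (s : Finset ι) {A : Set F} (hA : MeasurableSet A) :
    Measurable fun v : ι → F => markCount s A v :=
  (measurable_markCount_prod s (A := fun _ => A) (measurable_snd hA)).comp
    (measurable_prodMk_left (x := ()))

lemma indepFun_markCount_prodMk (hξ : ∀ k, Measurable (ξ k)) (h : iIndepFun ξ P) {A B : Set F}
    (hA : MeasurableSet A) (hB : MeasurableSet B) {s : Finset ι} {k : ι} (hk : k ∉ s) :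
    IndepFun (fun ω => (markCount s A (fun l => ξ l ω), markCount s B (fun l => ξ l ω))) (ξ k)
      P := by
  have hind := (h.indepFun_finset s {k} (Finset.disjoint_singleton_right.2 hk) hξ).comp
    ((measurable_markCount Finset.univ hA).prodMk (measurable_markCount Finset.univ hB))
    (measurable_pi_apply (⟨k, Finset.mem_singleton_self k⟩ : ({k} : Finset ι)))
  simp_rw [← markCount_univ_subtype s]
  exact hind

lemma measureReal_markCount_and_mem (hξ : ∀ k, Measurable (ξ k)) (h : iIndepFun ξ P) {A B C : Set F}
    (hA : MeasurableSet A) (hB : MeasurableSet B) (hC : MeasurableSet C) {s : Finset ι} {k : ι}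
    (hk : k ∉ s) (Q : ℕ → ℕ → Prop) :
    P.real {ω | Q (markCount s A (fun l => ξ l ω)) (markCount s B (fun l => ξ l ω)) ∧ ξ k ω ∈ C} =
      P.real {ω | Q (markCount s A (fun l => ξ l ω)) (markCount s B (fun l => ξ l ω))} *
        P.real (ξ k ⁻¹' C) := by
  have hind := (indepFun_markCount_prodMk hξ h hA hB hk).measure_inter_preimage_eq_mul
    {p | Q p.1 p.2} C MeasurableSet.of_discrete hC
  simpa only [measureReal_def, ENNReal.toReal_mul] using! congrArg ENNReal.toReal hind

variable [IsProbabilityMeasure P]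

lemma measureReal_markCount_insert_lt [DecidableEq ι] (hξ : ∀ k, Measurable (ξ k))
    (h : iIndepFun ξ P) {A : Set F} (hA : MeasurableSet A) {s : Finset ι} {k : ι} (hk : k ∉ s)
    (a : ℕ) :
    P.real {ω | markCount (insert k s) A (fun l => ξ l ω) < a} =
      P.real {ω | markCount s A (fun l => ξ l ω) < a} * (1 - P.real (ξ k ⁻¹' A)) +
        P.real {ω | markCount s A (fun l => ξ l ω) < a - 1} * P.real (ξ k ⁻¹' A) := by
  have hcompl : P.real (ξ k ⁻¹' Aᶜ) = 1 - P.real (ξ k ⁻¹' A) :=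
    probReal_compl_eq_one_sub (hξ k hA)
  have hcount : Measurable fun ω => markCount s A fun l => ξ l ω :=
    (measurable_markCount s hA).comp (measurable_pi_lambda _ hξ)
  rw [← hcompl, ← measureReal_markCount_and_mem hξ h hA hA hA.compl hk fun m _ => m < a,
    ← measureReal_markCount_and_mem hξ h hA hA hA hk fun m _ => m < a - 1, ← measureReal_union]
  · congr 1
    ext ω
    exact markCount_insert_lt_iff hk A _ a
  · exact Set.disjoint_left.2 fun ω h₁ h₂ => h₁.2 h₂.2
  · exact (hcount measurableSet_Iio).inter (hξ k hA)

lemma measureReal_markCount_insert_lt_and_lt_le [DecidableEq ι] (hξ : ∀ k, Measurable (ξ k))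
    (h : iIndepFun ξ P) {A B : Set F} (hA : MeasurableSet A) (hB : MeasurableSet B)
    (hAB : Disjoint A B) {s : Finset ι} {k : ι} (hk : k ∉ s) (a b : ℕ) :
    P.real {ω | markCount (insert k s) A (fun l => ξ l ω) < a ∧
        markCount (insert k s) B (fun l => ξ l ω) < b} ≤
      P.real {ω | markCount s A (fun l => ξ l ω) < a ∧ markCount s B (fun l => ξ l ω) < b} *
          (1 - (P.real (ξ k ⁻¹' A) + P.real (ξ k ⁻¹' B))) +
        P.real {ω | markCount s A (fun l => ξ l ω) < a - 1 ∧
          markCount s B (fun l => ξ l ω) < b} * P.real (ξ k ⁻¹' A) +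
        P.real {ω | markCount s A (fun l => ξ l ω) < a ∧
          markCount s B (fun l => ξ l ω) < b - 1} * P.real (ξ k ⁻¹' B) := by
  have hcompl : P.real (ξ k ⁻¹' (A ∪ B)ᶜ) =
      1 - (P.real (ξ k ⁻¹' A) + P.real (ξ k ⁻¹' B)) := by
    rw [← measureReal_union (hAB.preimage (ξ k)) (hξ k hB)]
    exact probReal_compl_eq_one_sub (hξ k (hA.union hB))
  rw [← hcompl,
    ← measureReal_markCount_and_mem hξ h hA hB (hA.union hB).compl hk fun m n => m < a ∧ n < b,
    ← measureReal_markCount_and_mem hξ h hA hB hA hk fun m n => m < a - 1 ∧ n < b,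
    ← measureReal_markCount_and_mem hξ h hA hB hB hk fun m n => m < a ∧ n < b - 1]
  refine (measureReal_mono fun ω => ?_).trans ((measureReal_union_le _ _).trans
    (add_le_add_left (measureReal_union_le _ _) _))
  have hdisj : ξ k ω ∈ A → ξ k ω ∉ B := fun h₁ h₂ => Set.disjoint_left.1 hAB h₁ h₂
  simp only [Set.mem_ofPred_eq, markCount_insert_lt_iff hk, Set.mem_union, Set.mem_compl_iff]
  tauto

-- Negative correlation: a mark in `A` is one fewer candidate for `B`.
theorem measureReal_markCount_lt_and_lt_le (hξ : ∀ k, Measurable (ξ k)) (h : iIndepFun ξ P)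
    {A B : Set F} (hA : MeasurableSet A) (hB : MeasurableSet B) (hAB : Disjoint A B)
    (s : Finset ι) (a b : ℕ) :
    P.real {ω | markCount s A (fun l => ξ l ω) < a ∧ markCount s B (fun l => ξ l ω) < b} ≤
      P.real {ω | markCount s A (fun l => ξ l ω) < a} *
        P.real {ω | markCount s B (fun l => ξ l ω) < b} := by
  classical
  induction s using Finset.induction_on generalizing a b with
  | empty =>
    simp only [markCount_empty]
    by_cases ha : 0 < a <;> by_cases hb : 0 < b <;> simp [ha, hb]
  | insert k s hk ih =>
    refine (measureReal_markCount_insert_lt_and_lt_le hξ h hA hB hAB hk a b).trans ?_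
    rw [measureReal_markCount_insert_lt hξ h hA hk, measureReal_markCount_insert_lt hξ h hB hk]
    have hmonoA := measureReal_markCount_lt_mono (P := P) (ξ := ξ) s A (Nat.sub_le a 1)
    have hmonoB := measureReal_markCount_lt_mono (P := P) (ξ := ξ) s B (Nat.sub_le b 1)
    have hsum : P.real (ξ k ⁻¹' A) + P.real (ξ k ⁻¹' B) ≤ 1 := by
      rw [← measureReal_union (hAB.preimage (ξ k)) (hξ k hB)]
      exact measureReal_le_one
    have hpA : 0 ≤ P.real (ξ k ⁻¹' A) := measureReal_nonneg
    have hpB : 0 ≤ P.real (ξ k ⁻¹' B) := measureReal_nonneg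
    nlinarith [mul_le_mul_of_nonneg_right (ih a b) (sub_nonneg.2 hsum),
      mul_le_mul_of_nonneg_right (ih (a - 1) b) hpA,
      mul_le_mul_of_nonneg_right (ih a (b - 1)) hpB,
      mul_nonneg (mul_nonneg hpA hpB) (mul_nonneg (sub_nonneg.2 hmonoA) (sub_nonneg.2 hmonoB))]

lemma choose_mul_pow_succ_eq {R : Type*} [CommRing R] (n K : ℕ) (a : R) :
    ((n + 1).choose (K + 1) : R) * a ^ (K + 1) * (1 - a) ^ (n + 1 - (K + 1)) =
      n.choose (K + 1) * a ^ (K + 1) * (1 - a) ^ (n - (K + 1)) * (1 - a) +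
        n.choose K * a ^ K * (1 - a) ^ (n - K) * a := by
  rw [Nat.choose_succ_succ, Nat.add_sub_add_right]
  rcases lt_or_ge K n with hK | hK
  · obtain ⟨e, rfl⟩ := Nat.exists_eq_add_of_lt hK
    rw [show K + e + 1 - K = e + 1 by omega, show K + e + 1 - (K + 1) = e by omega]
    push_cast
    ring
  · rw [Nat.choose_eq_zero_of_lt (show n < K + 1 by omega)]
    push_cast
    ring

-- A single binomial weight already has the exponential order of the whole lower tail.
theorem choose_mul_le_measureReal_markCount_lt (hξ : ∀ k, Measurable (ξ k)) (h : iIndepFun ξ P)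
    {A : Set F} (hA : MeasurableSet A) {a : ℝ} (ha : a ∈ Set.Icc (0 : ℝ) 1) {s : Finset ι}
    (hle : ∀ k ∈ s, P.real (ξ k ⁻¹' A) ≤ a) (K : ℕ) :
    (s.card.choose K : ℝ) * a ^ K * (1 - a) ^ (s.card - K) ≤
      P.real {ω | markCount s A (fun l => ξ l ω) < K + 1} := by
  classical
  induction s using Finset.induction_on generalizing K with
  | empty => rcases K with _ | K <;> simp [markCount_empty]
  | insert k s hk ih =>
    have hcount := ih fun l hl => hle l (Finset.mem_insert_of_mem hl)
    have hp := hle k (Finset.mem_insert_self k s)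
    have hmono := measureReal_markCount_lt_mono (P := P) (ξ := ξ) s A (Nat.sub_le (K + 1) 1)
    have hcard := Finset.card_insert_of_notMem hk
    suffices hbinom : ((insert k s).card.choose K : ℝ) * a ^ K * (1 - a) ^ ((insert k s).card - K) ≤
        P.real {ω | markCount s A (fun l => ξ l ω) < K + 1} * (1 - a) +
          P.real {ω | markCount s A (fun l => ξ l ω) < K + 1 - 1} * a by
      rw [measureReal_markCount_insert_lt hξ h hA hk]
      nlinarith
    rw [hcard]
    have hmiss := mul_le_mul_of_nonneg_right (hcount K) (sub_nonneg.2 ha.2)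
    rcases K with _ | K
    · simpa [pow_succ] using hmiss
    · rw [choose_mul_pow_succ_eq]
      exact add_le_add hmiss (mul_le_mul_of_nonneg_right (hcount K) ha.1)

end Counting

section Torus

/-- The integer vector `z` as a point of Euclidean space. -/
def latticePoint (z : Fin d → ℤ) : EuclideanSpace ℝ (Fin d) :=
  (WithLp.equiv 2 (Fin d → ℝ)).symm fun i => z i

lemma latticePoint_apply (z : Fin d → ℤ) (i : Fin d) : latticePoint z i = z i := rfl

lemma torusDist_le_norm_sub (x y : EuclideanSpace ℝ (Fin d)) (z : Fin d → ℤ) :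
    torusDist x y ≤ ‖x - y - latticePoint z‖ :=
  ciInf_le ⟨0, by rintro _ ⟨z, rfl⟩; exact norm_nonneg _⟩ z

lemma torusDist_nonneg (x y : EuclideanSpace ℝ (Fin d)) : 0 ≤ torusDist x y :=
  Real.iInf_nonneg fun _ => norm_nonneg _

lemma exists_torusDist_eq (x y : EuclideanSpace ℝ (Fin d)) :
    ∃ z : Fin d → ℤ, torusDist x y = ‖x - y - latticePoint z‖ := by
  refine ⟨fun i => round ((x - y) i),
    le_antisymm (torusDist_le_norm_sub _ _ _) (le_ciInf fun z => ?_)⟩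
  rw [EuclideanSpace.norm_eq, EuclideanSpace.norm_eq]
  refine Real.sqrt_le_sqrt (Finset.sum_le_sum fun i _ => pow_le_pow_left₀ (norm_nonneg _) ?_ 2)
  simpa [latticePoint_apply] using round_le ((x - y) i) (z i)

lemma torusDist_le_add (x y w : EuclideanSpace ℝ (Fin d)) :
    torusDist x y ≤ torusDist x w + torusDist y w := by
  obtain ⟨z₁, h₁⟩ := exists_torusDist_eq x w
  obtain ⟨z₂, h₂⟩ := exists_torusDist_eq y w
  have hz : x - y - latticePoint (z₁ - z₂) =
      (x - w - latticePoint z₁) - (y - w - latticePoint z₂) := by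
    ext i
    simp only [PiLp.sub_apply, latticePoint_apply, Pi.sub_apply, Int.cast_sub]
    ring
  calc torusDist x y ≤ ‖x - y - latticePoint (z₁ - z₂)‖ := torusDist_le_norm_sub _ _ _
    _ ≤ torusDist x w + torusDist y w := by
        rw [hz, h₁, h₂]
        exact norm_sub_le _ _

lemma measurable_torusDist : Measurable
    fun p : EuclideanSpace ℝ (Fin d) × EuclideanSpace ℝ (Fin d) => torusDist p.1 p.2 := by
  unfold torusDist
  exact Measurable.iInf fun z => by fun_prop

lemma measurableSet_cube : MeasurableSet (cube d) := by
  simp only [cube, Set.ofPred_forall]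
  exact MeasurableSet.iInter fun i =>
    measurableSet_Ioc.preimage (by fun_prop : Measurable fun x : EuclideanSpace ℝ (Fin d) => x i)

lemma eq_of_sub_latticePoint_mem_cube {y : EuclideanSpace ℝ (Fin d)} {z w : Fin d → ℤ}
    (hz : y - latticePoint z ∈ cube d) (hw : y - latticePoint w ∈ cube d) : z = w := by
  ext i
  obtain ⟨hz₁, hz₂⟩ : -(1 / 2 : ℝ) < y i - z i ∧ y i - z i ≤ 1 / 2 := hz i
  obtain ⟨hw₁, hw₂⟩ : -(1 / 2 : ℝ) < y i - w i ∧ y i - w i ≤ 1 / 2 := hw i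
  have hzw : z i - w i < 1 := by exact_mod_cast (by linarith : (z i - w i : ℝ) < 1)
  have hwz : w i - z i < 1 := by exact_mod_cast (by linarith : (w i - z i : ℝ) < 1)
  omega

lemma tsum_lintegral_cube_add_latticePoint_le {f : EuclideanSpace ℝ (Fin d) → ENNReal}
    (hf : Measurable f) :
    ∑' z, ∫⁻ y in cube d, f (y + latticePoint z) ≤ ∫⁻ y, f y := by
  have htranslate : ∀ z : Fin d → ℤ, ∫⁻ y in cube d, f (y + latticePoint z) =
      ∫⁻ y in (fun y => y - latticePoint z) ⁻¹' cube d, f y := fun z => by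
    have h := (measurePreserving_sub_right volume (latticePoint z)).setLIntegral_comp_preimage
      measurableSet_cube (hf.comp (measurable_add_const (latticePoint z)))
    simp only [Function.comp_apply, sub_add_cancel] at h
    exact h.symm
  rw [tsum_congr htranslate, ← lintegral_iUnion]
  · exact setLIntegral_le_lintegral _ _
  · exact fun z => measurableSet_cube.preimage (measurable_sub_const _)
  · exact fun z w hzw => Set.disjoint_left.2 fun y hz hw =>
      hzw (eq_of_sub_latticePoint_mem_cube hz hw)

lemma lintegral_cube_torusDist_le {φ : ℝ → ENNReal} (hφ : Measurable φ)
    (x : EuclideanSpace ℝ (Fin d)) :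
    ∫⁻ y in cube d, φ (torusDist x y) ≤ ∫⁻ y : EuclideanSpace ℝ (Fin d), φ ‖y‖ := by
  have hφx : Measurable fun y : EuclideanSpace ℝ (Fin d) => φ ‖x - y‖ :=
    hφ.comp (by fun_prop)
  calc ∫⁻ y in cube d, φ (torusDist x y)
      ≤ ∫⁻ y in cube d, ∑' z, φ ‖x - (y + latticePoint z)‖ := by
        refine lintegral_mono fun y => ?_
        obtain ⟨z, hz⟩ := exists_torusDist_eq x y
        rw [hz, sub_sub]
        exact ENNReal.le_tsum (f := fun z => φ ‖x - (y + latticePoint z)‖) z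
    _ = ∑' z, ∫⁻ y in cube d, φ ‖x - (y + latticePoint z)‖ :=
        lintegral_tsum fun z => (hφx.comp (measurable_add_const _)).aemeasurable
    _ ≤ ∫⁻ y, φ ‖x - y‖ := tsum_lintegral_cube_add_latticePoint_le hφx
    _ = ∫⁻ y, φ ‖y‖ := lintegral_sub_left_eq_self (fun y => φ ‖y‖) x

lemma volume_cube_torusDist_lt_le (R : ℝ) (x : EuclideanSpace ℝ (Fin d)) :
    volume.restrict (cube d) {y | torusDist x y < R} ≤
      volume (Metric.ball (0 : EuclideanSpace ℝ (Fin d)) R) := by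
  have hmeas : MeasurableSet {y | torusDist x y < R} :=
    (measurable_torusDist.comp (measurable_prodMk_left (x := x))) measurableSet_Iio
  calc volume.restrict (cube d) {y | torusDist x y < R}
      = ∫⁻ y in cube d, (Set.Iio R).indicator 1 (torusDist x y) := by
        rw [← lintegral_indicator_one hmeas]
        exact lintegral_congr fun y => by simp [Set.indicator_apply]
    _ ≤ ∫⁻ y : EuclideanSpace ℝ (Fin d), (Set.Iio R).indicator 1 ‖y‖ :=
        lintegral_cube_torusDist_le (measurable_one.indicator measurableSet_Iio) x
    _ = volume (Metric.ball (0 : EuclideanSpace ℝ (Fin d)) R) := by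
        rw [← lintegral_indicator_one Metric.isOpen_ball.measurableSet]
        exact lintegral_congr fun y => by classical simp [Set.indicator_apply]

end Torus

section Connection

lemma Model.measurable_g_max (M : Model d P) : Measurable fun t => M.g (max t 0) :=
  Antitone.measurable fun s t h =>
    M.g_antitone (le_max_right s 0) (le_max_right t 0) (max_le_max_right 0 h)

lemma Model.g_torusDist_mem (M : Model d P) {r : ℝ} (hr : 0 < r)
    (x y : EuclideanSpace ℝ (Fin d)) : M.g (torusDist x y / r) ∈ Set.Icc (0 : ℝ) 1 :=
  M.g_mem _ (div_nonneg (torusDist_nonneg _ _) hr.le)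

lemma Model.measurable_g_torusDist (M : Model d P) {r : ℝ} (hr : 0 < r) : Measurable
    fun p : EuclideanSpace ℝ (Fin d) × EuclideanSpace ℝ (Fin d) =>
      M.g (torusDist p.1 p.2 / r) := by
  have h := M.measurable_g_max.comp (measurable_torusDist (d := d) |>.div_const r)
  simpa only [Function.comp_def, max_eq_left (div_nonneg (torusDist_nonneg _ _) hr.le)] using h

lemma Model.measurable_g_torusDist_left (M : Model d P) {r : ℝ} (hr : 0 < r)
    (x : EuclideanSpace ℝ (Fin d)) : Measurable fun z => M.g (torusDist x z / r) :=
  (M.measurable_g_torusDist hr).of_uncurry_left (f := fun x z => M.g (torusDist x z / r))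

lemma Model.lintegral_g_norm_div (M : Model d P) {r : ℝ} (hr : 0 < r) :
    ∫⁻ y : EuclideanSpace ℝ (Fin d), ENNReal.ofReal (M.g (‖y‖ / r)) =
      ENNReal.ofReal (M.α * r ^ d) := by
  have hnorm : ∀ y : EuclideanSpace ℝ (Fin d), ‖y‖ / r = ‖r⁻¹ • y‖ := fun y => by
    rw [norm_smul, norm_inv, Real.norm_of_nonneg hr.le, div_eq_inv_mul]
  simp only [hnorm]
  rw [← ofReal_integral_eq_lintegral_ofReal (M.g_integrable.comp_smul (inv_ne_zero hr.ne'))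
      (Eventually.of_forall fun y => (M.g_mem _ (norm_nonneg _)).1),
    Measure.integral_comp_smul volume (fun y : EuclideanSpace ℝ (Fin d) => M.g ‖y‖) r⁻¹,
    ← M.α_def, finrank_euclideanSpace_fin, inv_pow, inv_inv, abs_of_pos (pow_pos hr d),
    smul_eq_mul, mul_comm]

lemma Model.lintegral_g_torusDist_le (M : Model d P) {r : ℝ} (hr : 0 < r)
    (x : EuclideanSpace ℝ (Fin d)) :
    ∫⁻ y in cube d, ENNReal.ofReal (M.g (torusDist x y / r)) ≤ ENNReal.ofReal (M.α * r ^ d) := by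
  have h := lintegral_cube_torusDist_le
    (ENNReal.measurable_ofReal.comp (M.measurable_g_max.comp (measurable_id.div_const r))) x
  simp only [Function.comp_apply, id_eq, max_eq_left (div_nonneg (torusDist_nonneg _ _) hr.le),
    max_eq_left (div_nonneg (norm_nonneg _) hr.le)] at h
  exact h.trans_eq (M.lintegral_g_norm_div hr)

lemma Model.g_torusDist_mul_le (M : Model d P) {r R : ℝ} (hr : 0 < r) (hR : 0 ≤ R)
    {x y : EuclideanSpace ℝ (Fin d)} (hxy : R ≤ torusDist x y) (z : EuclideanSpace ℝ (Fin d)) :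
    M.g (torusDist x z / r) * M.g (torusDist y z / r) ≤
      M.g (R / (2 * r)) * (M.g (torusDist x z / r) + M.g (torusDist y z / r)) := by
  have hx := M.g_torusDist_mem hr x z
  have hy := M.g_torusDist_mem hr y z
  have hR' : 0 ≤ R / (2 * r) := by positivity
  have hgR := M.g_mem _ hR'
  have hfar : ∀ t, R / 2 ≤ t → M.g (t / r) ≤ M.g (R / (2 * r)) := fun t ht => by
    have h : R / (2 * r) ≤ t / r := by
      rw [div_mul_eq_div_div]
      gcongr
    exact M.g_antitone hR' (hR'.trans h) h
  rcases le_total (R / 2) (torusDist x z) with h | h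
  · nlinarith [hfar _ h, hx.1, hy.1, hgR.1]
  · have h' : R / 2 ≤ torusDist y z := by linarith [torusDist_le_add x y z]
    nlinarith [hfar _ h', hx.1, hy.1, hgR.1]

lemma Model.lintegral_g_mul_g_le (M : Model d P) {r R : ℝ} (hr : 0 < r) (hR : 0 ≤ R)
    {x y : EuclideanSpace ℝ (Fin d)} (hxy : R ≤ torusDist x y) :
    ∫⁻ z in cube d,
        ENNReal.ofReal (M.g (torusDist x z / r)) * ENNReal.ofReal (M.g (torusDist y z / r)) ≤
      ENNReal.ofReal (2 * M.g (R / (2 * r)) * (M.α * r ^ d)) := by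
  have hgR : 0 ≤ M.g (R / (2 * r)) := (M.g_mem _ (by positivity)).1
  have hα : 0 ≤ M.α * r ^ d := mul_nonneg M.α_pos.le (by positivity)
  have hmeas : Measurable fun z => ENNReal.ofReal (M.g (torusDist x z / r)) :=
    (M.measurable_g_torusDist_left hr x).ennreal_ofReal
  calc _ ≤ ∫⁻ z in cube d, ENNReal.ofReal (M.g (R / (2 * r))) *
        (ENNReal.ofReal (M.g (torusDist x z / r)) + ENNReal.ofReal (M.g (torusDist y z / r))) := by
        refine lintegral_mono fun z => ?_
        have hx := (M.g_torusDist_mem hr x z).1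
        have hy := (M.g_torusDist_mem hr y z).1
        rw [← ENNReal.ofReal_mul hx, ← ENNReal.ofReal_add hx hy, ← ENNReal.ofReal_mul hgR]
        exact ENNReal.ofReal_le_ofReal (M.g_torusDist_mul_le hr hR hxy z)
    _ ≤ ENNReal.ofReal (M.g (R / (2 * r))) *
        (ENNReal.ofReal (M.α * r ^ d) + ENNReal.ofReal (M.α * r ^ d)) := by
        rw [lintegral_const_mul' _ _ ENNReal.ofReal_ne_top, lintegral_add_left hmeas]
        gcongr <;> exact M.lintegral_g_torusDist_le hr _
    _ = ENNReal.ofReal (2 * M.g (R / (2 * r)) * (M.α * r ^ d)) := by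
        rw [← ENNReal.ofReal_add hα hα, ← ENNReal.ofReal_mul hgR]
        congr 1
        ring

end Connection

section Independence

lemma iIndep_sumElim {ι κ : Type*} {m₁ : ι → MeasurableSpace Ω} {m₂ : κ → MeasurableSpace Ω}
    (h₁ : iIndep m₁ P) (h₂ : iIndep m₂ P) (h : Indep (⨆ i, m₁ i) (⨆ j, m₂ j) P) :
    iIndep (Sum.elim m₁ m₂) P := by
  rw [iIndep_iff]
  intro s f hf
  have hleft : ∀ i ∈ s.toLeft, MeasurableSet[m₁ i] (f (Sum.inl i)) := fun i hi =>
    hf _ (Finset.mem_toLeft.1 hi)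
  have hright : ∀ j ∈ s.toRight, MeasurableSet[m₂ j] (f (Sum.inr j)) := fun j hj =>
    hf _ (Finset.mem_toRight.1 hj)
  have hsplit : ⋂ i ∈ s, f i =
      (⋂ i ∈ s.toLeft, f (Sum.inl i)) ∩ ⋂ j ∈ s.toRight, f (Sum.inr j) := by
    ext ω
    simp only [Set.mem_iInter, Set.mem_inter_iff, Finset.mem_toLeft, Finset.mem_toRight,
      Sum.forall]
  have hleft' : MeasurableSet[⨆ i, m₁ i] (⋂ i ∈ s.toLeft, f (Sum.inl i)) :=
    s.toLeft.measurableSet_biInter fun i hi => le_iSup m₁ i _ (hleft i hi)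
  have hright' : MeasurableSet[⨆ j, m₂ j] (⋂ j ∈ s.toRight, f (Sum.inr j)) :=
    s.toRight.measurableSet_biInter fun j hj => le_iSup m₂ j _ (hright j hj)
  rw [hsplit, (Indep_iff _ _ _).1 h _ _ hleft' hright', h₁.meas_biInter hleft,
    h₂.meas_biInter hright, ← Finset.prod_disjSum s.toLeft s.toRight fun i => P (f i),
    Finset.toLeft_disjSum_toRight]

lemma iIndep_iSup_of_pairwise_disjoint {ι κ : Type*} {m : ι → MeasurableSpace Ω}
    (hle : ∀ i, m i ≤ ‹MeasurableSpace Ω›) (h : iIndep m P) {S : κ → Set ι}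
    (hS : Pairwise (Function.onFun Disjoint S)) : iIndep (fun k => ⨆ i ∈ S k, m i) P := by
  classical
  have := h.isProbabilityMeasure
  rw [iIndep_iff]
  intro s f hf
  induction s using Finset.induction_on with
  | empty => simp
  | insert k s hk ih =>
    have hdisj : Disjoint (S k) (⋃ l ∈ s, S l) :=
      Set.disjoint_iUnion₂_right.2 fun l hl => hS (ne_of_mem_of_not_mem hl hk).symm
    have hrest : MeasurableSet[⨆ i ∈ ⋃ l ∈ s, S l, m i] (⋂ l ∈ s, f l) :=
      s.measurableSet_biInter fun l hl =>
        (biSup_mono fun i hi => Set.mem_biUnion hl hi : ⨆ i ∈ S l, m i ≤ _) _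
          (hf l (Finset.mem_insert_of_mem hl))
    rw [Finset.set_biInter_insert, Finset.prod_insert hk,
      (Indep_iff _ _ _).1 (indep_iSup_of_disjoint hle h hdisj) _ _
        (hf k (Finset.mem_insert_self k s)) hrest,
      ih fun l hl => hf l (Finset.mem_insert_of_mem hl)]

lemma measure_prodMk_mem_eq_lintegral [IsFiniteMeasure P] {E F : Type*} [MeasurableSpace E]
    [MeasurableSpace F] {ξ : Ω → E} {η : Ω → F} (hξ : Measurable ξ) (hη : Measurable η)
    (h : IndepFun ξ η P) {S : Set (E × F)} (hS : MeasurableSet S) :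
    P {ω | (ξ ω, η ω) ∈ S} = ∫⁻ x, P {ω | (x, η ω) ∈ S} ∂(P.map ξ) := by
  have hmap : P {ω | (ξ ω, η ω) ∈ S} = P.map (fun ω => (ξ ω, η ω)) S :=
    (Measure.map_apply (hξ.prodMk hη) hS).symm
  rw [hmap, (indepFun_iff_map_prod_eq_prod_map_map hξ.aemeasurable hη.aemeasurable).1 h,
    Measure.prod_apply hS]
  exact lintegral_congr fun x => Measure.map_apply hη (measurable_prodMk_left hS)

/-- The independent sources of randomness of the graph at fixed vertex labels: the positions
and the edge variables. -/
abbrev SourceIndex : Type := {i : ℕ // 1 ≤ i} ⊕ {p : ℕ × ℕ // 1 ≤ p.1 ∧ p.1 < p.2}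

/-- The σ-algebra generated by a single source of randomness. -/
abbrev Model.source (M : Model d P) : SourceIndex → MeasurableSpace Ω :=
  Sum.elim (fun i => MeasurableSpace.comap (M.X i) inferInstance)
    (fun p => MeasurableSpace.comap (M.U p.1.1 p.1.2) inferInstance)

lemma Model.source_le (M : Model d P) : ∀ s, M.source s ≤ ‹MeasurableSpace Ω›
  | Sum.inl i => (M.X_meas i).comap_le
  | Sum.inr _ => (M.U_meas _ _).comap_le

lemma Model.indepFun_X_U (M : Model d P) :
    IndepFun (fun ω (i : ℕ) => M.X i ω) (fun ω (p : ℕ × ℕ) => M.U p.1 p.2 ω) P :=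
  M.families_indep.indep (i := 0) (j := 2) (by decide)

lemma Model.iIndep_source (M : Model d P) : iIndep M.source P := by
  refine iIndep_sumElim M.X_indep.iIndep M.U_indep.iIndep
    (indep_of_indep_of_le M.indepFun_X_U (iSup_le fun i => ?_) (iSup_le fun p => ?_))
  · exact (measurable_iff_comap_le.1
      ((measurable_pi_apply i.1).comp (comap_measurable fun ω (i : ℕ) => M.X i ω)))
  · exact (measurable_iff_comap_le.1
      ((measurable_pi_apply p.1).comp (comap_measurable fun ω (p : ℕ × ℕ) => M.U p.1 p.2 ω)))

lemma Model.measurable_X_iSup_source (M : Model d P) {S : Set SourceIndex} {i : ℕ} (hi : 1 ≤ i)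
    (h : Sum.inl ⟨i, hi⟩ ∈ S) : Measurable[⨆ s ∈ S, M.source s] (M.X i) :=
  measurable_iff_comap_le.2
    (le_iSup₂ (f := fun s (_ : s ∈ S) => M.source s) (Sum.inl ⟨i, hi⟩ : SourceIndex) h)

lemma Model.measurable_U_iSup_source (M : Model d P) {S : Set SourceIndex} {i j : ℕ}
    (hij : 1 ≤ i ∧ i < j) (h : Sum.inr ⟨(i, j), hij⟩ ∈ S) :
    Measurable[⨆ s ∈ S, M.source s] (M.U i j) :=
  measurable_iff_comap_le.2
    (le_iSup₂ (f := fun s (_ : s ∈ S) => M.source s) (Sum.inr ⟨(i, j), hij⟩ : SourceIndex) h)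

/-- What the vertices of `S` see of vertex `k`: its position and the variables of the edges that
join it to `S`. -/
def Model.mark (M : Model d P) (S : Finset ℕ) (k : ℕ) (ω : Ω) :
    EuclideanSpace ℝ (Fin d) × (S → ℝ) :=
  (M.X k ω, fun i => M.U (min i k) (max i k) ω)

lemma Model.measurable_mark (M : Model d P) (S : Finset ℕ) (k : ℕ) : Measurable (M.mark S k) :=
  (M.X_meas k).prodMk (measurable_pi_lambda _ fun _ => M.U_meas _ _)

/-- The sources on which `mark S k` depends. -/
def markSources (S : Finset ℕ) (k : ℕ) : Set SourceIndex :=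
  {s | Sum.elim (fun l => l.1 = k) (fun p => ∃ i ∈ S, p.1 = (min i k, max i k)) s}

variable {S T : Finset ℕ}

lemma Model.measurable_mark_iSup_source (M : Model d P) {k : ℕ} (hS : ∀ i ∈ S, 1 ≤ i)
    (hk : 1 ≤ k) (hkS : k ∉ S) :
    Measurable[⨆ s ∈ markSources S k, M.source s] (M.mark S k) := by
  refine Measurable.prodMk (M.measurable_X_iSup_source hk rfl)
    ((@measurable_pi_iff Ω S _ (⨆ s ∈ markSources S k, M.source s) _ _).2 fun i => ?_)
  have hi := hS i i.2
  have hik : (i : ℕ) ≠ k := fun h => hkS (h ▸ i.2)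
  exact M.measurable_U_iSup_source ⟨by omega, by omega⟩ ⟨i, i.2, rfl⟩

lemma disjoint_markSources {k l : ℕ} (hl : l ∉ S) (hkl : k ≠ l) :
    Disjoint (markSources S k) (markSources S l) := by
  rw [Set.disjoint_left]
  rintro (a | p) h h'
  · exact hkl (Eq.symm (h : a.1 = k) ▸ (h' : a.1 = l))
  · obtain ⟨i, hi, hpi⟩ : ∃ i ∈ S, p.1 = (min i k, max i k) := h
    obtain ⟨j, -, hpj⟩ : ∃ i ∈ S, p.1 = (min i l, max i l) := h'
    obtain ⟨hmin, hmax⟩ := Prod.mk.inj (hpi.symm.trans hpj)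
    have hil : i ≠ l := fun h => hl (h ▸ hi)
    omega

lemma Model.iIndepFun_mark (M : Model d P) (hS : ∀ i ∈ S, 1 ≤ i) (hT : ∀ k ∈ T, 1 ≤ k ∧ k ∉ S) :
    iIndepFun (fun k : T => M.mark S k) P := by
  refine iIndep_of_iIndep_of_le (iIndep_iSup_of_pairwise_disjoint M.source_le M.iIndep_source
    (S := fun k : T => markSources S k) fun k l hkl => ?_) fun k => ?_
  · exact disjoint_markSources (hT l l.2).2 (Subtype.coe_ne_coe.2 hkl)
  · exact (M.measurable_mark_iSup_source hS (hT k k.2).1 (hT k k.2).2).comap_le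

lemma Model.indepFun_X_mark (M : Model d P) (hS : ∀ i ∈ S, 1 ≤ i)
    (hT : ∀ k ∈ T, 1 ≤ k ∧ k ∉ S) :
    IndepFun (fun ω (i : S) => M.X i ω) (fun ω (k : T) => M.mark S k ω) P := by
  let positions : Set SourceIndex := Sum.inl '' {i | i.1 ∈ S}
  have hdisj : Disjoint positions (⋃ k ∈ T, markSources S k) := by
    rw [Set.disjoint_left]
    rintro _ ⟨i, hi, rfl⟩ h
    obtain ⟨k, hk, hik⟩ := Set.mem_iUnion₂.1 h
    exact (hT k hk).2 ((hik : i.1 = k) ▸ hi)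
  refine indep_of_indep_of_le (indep_iSup_of_disjoint M.source_le M.iIndep_source hdisj)
    (measurable_iff_comap_le.1 ?_) (measurable_iff_comap_le.1 ?_)
  · exact (@measurable_pi_iff Ω S _ (⨆ s ∈ positions, M.source s) _ _).2 fun i =>
      M.measurable_X_iSup_source (hS i i.2) ⟨_, i.2, rfl⟩
  · refine (@measurable_pi_iff Ω T _ (⨆ s ∈ ⋃ k ∈ T, markSources S k, M.source s) _ _).2
      fun k => ?_
    exact (M.measurable_mark_iSup_source hS (hT k k.2).1 (hT k k.2).2).mono
      (biSup_mono fun _ hs => Set.mem_biUnion k.2 hs) le_rfl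

lemma Model.map_X_prodMk [IsProbabilityMeasure P] (M : Model d P) {i j : ℕ} (hi : 1 ≤ i)
    (hj : 1 ≤ j) (hij : i ≠ j) :
    P.map (fun ω => (M.X i ω, M.X j ω)) =
      (volume.restrict (cube d)).prod (volume.restrict (cube d)) := by
  have h : IndepFun (M.X i) (M.X j) P :=
    M.X_indep.indepFun (i := ⟨i, hi⟩) (j := ⟨j, hj⟩) (by simpa using hij)
  rw [(indepFun_iff_map_prod_eq_prod_map_map (M.X_meas i).aemeasurable
    (M.X_meas j).aemeasurable).1 h, M.X_unif i hi, M.X_unif j hj]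

lemma volume_restrict_Icc_Iic {t : ℝ} (ht : t ∈ Set.Icc (0 : ℝ) 1) :
    volume.restrict (Set.Icc (0 : ℝ) 1) (Set.Iic t) = ENNReal.ofReal t := by
  have h : Set.Iic t ∩ Set.Icc (0 : ℝ) 1 = Set.Icc 0 t := by
    ext u
    simp only [Set.mem_inter_iff, Set.mem_Iic, Set.mem_Icc]
    exact ⟨fun hu => ⟨hu.2.1, hu.1⟩, fun hu => ⟨hu.2, hu.1, hu.2.trans ht.2⟩⟩
  rw [Measure.restrict_apply measurableSet_Iic, h, Real.volume_Icc, sub_zero]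

lemma Model.measure_forall_U_le (M : Model d P) {k : ℕ} (hk : 1 ≤ k)
    (hS : ∀ i ∈ S, 1 ≤ i ∧ i ≠ k) {t : ℕ → ℝ} (ht : ∀ i, t i ∈ Set.Icc (0 : ℝ) 1) :
    P {ω | ∀ i ∈ S, M.U (min i k) (max i k) ω ≤ t i} = ∏ i ∈ S, ENNReal.ofReal (t i) := by
  let edge (i : S) : {p : ℕ × ℕ // 1 ≤ p.1 ∧ p.1 < p.2} :=
    ⟨(min i k, max i k), le_min (hS i i.2).1 hk, min_lt_max.2 (hS i i.2).2⟩
  have hedge : Function.Injective edge := fun i j hij => Subtype.ext (by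
    obtain ⟨hmin, hmax⟩ := Prod.mk.inj (Subtype.mk.inj hij)
    omega)
  have hset : {ω | ∀ i ∈ S, M.U (min i k) (max i k) ω ≤ t i} =
      ⋂ i ∈ (Finset.univ : Finset S), M.U (edge i).1.1 (edge i).1.2 ⁻¹' Set.Iic (t i) := by
    ext ω
    simp [edge]
  rw [hset, (M.U_indep.precomp hedge).measure_inter_preimage_eq_mul
      (sets := fun i => Set.Iic (t i)) _ fun _ _ => measurableSet_Iic, ← Finset.prod_coe_sort S]
  refine Finset.prod_congr rfl fun i _ => ?_
  rw [← volume_restrict_Icc_Iic (ht i), ← M.U_unif _ _ (edge i).2.1 (edge i).2.2,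
    Measure.map_apply (M.U_meas _ _) measurableSet_Iic]

lemma Model.measure_forall_U_le_comp_X [IsFiniteMeasure P] (M : Model d P) {k : ℕ} (hk : 1 ≤ k)
    (hS : ∀ i ∈ S, 1 ≤ i ∧ i ≠ k) {h : ℕ → EuclideanSpace ℝ (Fin d) → ℝ}
    (hmeas : ∀ i, Measurable (h i)) (hmem : ∀ i z, h i z ∈ Set.Icc (0 : ℝ) 1) :
    P {ω | ∀ i ∈ S, M.U (min i k) (max i k) ω ≤ h i (M.X k ω)} =
      ∫⁻ z in cube d, ∏ i ∈ S, ENNReal.ofReal (h i z) := by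
  have hind : IndepFun (M.X k) (fun ω (i : ℕ) => M.U (min i k) (max i k) ω) P :=
    M.indepFun_X_U.comp (measurable_pi_apply k)
      (measurable_pi_lambda _ fun i => measurable_pi_apply (min i k, max i k))
  have hset : MeasurableSet
      {q : EuclideanSpace ℝ (Fin d) × (ℕ → ℝ) | ∀ i ∈ S, q.2 i ≤ h i q.1} := by
    simp only [Set.ofPred_forall]
    exact S.measurableSet_biInter fun i _ =>
      measurableSet_le (by fun_prop) ((hmeas i).comp measurable_fst)
  refine (measure_prodMk_mem_eq_lintegral (M.X_meas k)
    (measurable_pi_lambda _ fun i => M.U_meas _ _) hind hset).trans ?_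
  rw [M.X_unif k hk]
  exact lintegral_congr fun z => M.measure_forall_U_le hk hS fun i => hmem i z

end Independence

section NeighbourCounts

variable {S T : Finset ℕ}

/-- The marks of the vertices joined at scale `r` to the vertex `i ∈ S` when it sits at `x`. -/
def Model.linkSet (M : Model d P) (r : ℝ) (i : S) (x : EuclideanSpace ℝ (Fin d)) :
    Set (EuclideanSpace ℝ (Fin d) × (S → ℝ)) :=
  {p | p.2 i ≤ M.g (torusDist x p.1 / r)}

lemma Model.measurableSet_linkSet_prod (M : Model d P) {r : ℝ} (hr : 0 < r) (i : S) :
    MeasurableSet {q : EuclideanSpace ℝ (Fin d) × (EuclideanSpace ℝ (Fin d) × (S → ℝ)) |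
      q.2 ∈ M.linkSet r i q.1} :=
  measurableSet_le (by fun_prop) ((M.measurable_g_torusDist hr).comp
    (by fun_prop : Measurable
      fun q : EuclideanSpace ℝ (Fin d) × (EuclideanSpace ℝ (Fin d) × (S → ℝ)) => (q.1, q.2.1)))

lemma Model.measurableSet_linkSet (M : Model d P) {r : ℝ} (hr : 0 < r) (i : S)
    (x : EuclideanSpace ℝ (Fin d)) : MeasurableSet (M.linkSet r i x) :=
  measurable_prodMk_left (x := x) (M.measurableSet_linkSet_prod hr i)

open Classical in
/-- The number of vertices `k ∈ T` joined to vertex `i` at scale `r`. -/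
def Model.nbrCount (M : Model d P) (r : ℝ) (T : Finset ℕ) (i : ℕ) (ω : Ω) : ℕ :=
  (T.filter fun k =>
    M.U (min i k) (max i k) ω ≤ M.g (torusDist (M.X i ω) (M.X k ω) / r)).card

lemma Model.nbrCount_mono (M : Model d P) (r : ℝ) (hST : S ⊆ T) (i : ℕ) (ω : Ω) :
    M.nbrCount r S i ω ≤ M.nbrCount r T i ω :=
  Finset.card_le_card (Finset.filter_subset_filter _ hST)

lemma Model.markCount_linkSet (M : Model d P) (r : ℝ) (T : Finset ℕ) (i : S) (ω : Ω) :
    markCount Finset.univ (M.linkSet r i (M.X i ω)) (fun k : T => M.mark S k ω) =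
      M.nbrCount r T i ω :=
  markCount_univ_subtype T (M.linkSet r i (M.X i ω)) fun k => M.mark S k ω

lemma Model.measurable_markCount_linkSet (M : Model d P) {r : ℝ} (hr : 0 < r) (T : Finset ℕ)
    (i : S) : Measurable fun q : EuclideanSpace ℝ (Fin d) ×
      (T → EuclideanSpace ℝ (Fin d) × (S → ℝ)) =>
        markCount Finset.univ (M.linkSet r i q.1) q.2 :=
  measurable_markCount_prod _ (M.measurableSet_linkSet_prod hr i)

lemma Model.measurable_nbrCount (M : Model d P) {r : ℝ} (hr : 0 < r) (T : Finset ℕ) (i : ℕ) :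
    Measurable (M.nbrCount r T i) := by
  let i' : ({i} : Finset ℕ) := ⟨i, Finset.mem_singleton_self i⟩
  have h := (M.measurable_markCount_linkSet hr T i').comp
    ((M.X_meas i).prodMk (measurable_pi_lambda _ fun k : T => M.measurable_mark {i} k))
  exact (funext (M.markCount_linkSet r T i') : _ = M.nbrCount r T i) ▸ h

/-- The conditional probability that the vertex `i ∈ S` has fewer than `K` neighbours in `T`,
given that it sits at `x`. -/
def Model.fewNbrsProb (M : Model d P) (r : ℝ) (T : Finset ℕ) (K : ℕ) (i : S)
    (x : EuclideanSpace ℝ (Fin d)) : ENNReal :=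
  P {ω | markCount Finset.univ (M.linkSet r i x) (fun k : T => M.mark S k ω) < K}

lemma isProbabilityMeasure_cube [IsProbabilityMeasure P] (M : Model d P) :
    IsProbabilityMeasure (volume.restrict (cube d)) := by
  rw [← M.X_unif 1 le_rfl]
  exact Measure.isProbabilityMeasure_map (M.X_meas 1).aemeasurable

variable [IsProbabilityMeasure P]

lemma Model.measure_mark_linkSet_le (M : Model d P) {r : ℝ} (hr : 0 < r) {i : S} {k : ℕ}
    (hi : 1 ≤ (i : ℕ)) (hk : 1 ≤ k) (hik : (i : ℕ) ≠ k) (x : EuclideanSpace ℝ (Fin d)) :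
    P (M.mark S k ⁻¹' M.linkSet r i x) ≤ ENNReal.ofReal (M.α * r ^ d) := by
  have h := M.measure_forall_U_le_comp_X (S := {(i : ℕ)}) hk (by simpa using ⟨hi, hik⟩)
    (fun _ => M.measurable_g_torusDist_left hr x) fun _ => M.g_torusDist_mem hr x
  simp only [Finset.mem_singleton, forall_eq, Finset.prod_singleton] at h
  exact h.trans_le (M.lintegral_g_torusDist_le hr x)

lemma Model.measure_mark_linkSet_inter_le (M : Model d P) {r R : ℝ} (hr : 0 < r) (hR : 0 ≤ R)
    {i j : S} {k : ℕ} (hi : 1 ≤ (i : ℕ)) (hj : 1 ≤ (j : ℕ)) (hij : (i : ℕ) ≠ j) (hk : 1 ≤ k)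
    (hik : (i : ℕ) ≠ k) (hjk : (j : ℕ) ≠ k) {x y : EuclideanSpace ℝ (Fin d)}
    (hxy : R ≤ torusDist x y) :
    P (M.mark S k ⁻¹' (M.linkSet r i x ∩ M.linkSet r j y)) ≤
      ENNReal.ofReal (2 * M.g (R / (2 * r)) * (M.α * r ^ d)) := by
  let position : ℕ → EuclideanSpace ℝ (Fin d) := Function.update (fun _ => y) i x
  have hposi : position i = x := Function.update_self ..
  have hposj : position j = y := Function.update_of_ne hij.symm ..
  have h := M.measure_forall_U_le_comp_X (S := {(i : ℕ), (j : ℕ)}) hk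
    (by simpa using ⟨⟨hi, hik⟩, hj, hjk⟩)
    (fun l => M.measurable_g_torusDist_left hr (position l))
    fun l => M.g_torusDist_mem hr (position l)
  simp only [Finset.mem_insert, Finset.mem_singleton, forall_eq_or_imp, forall_eq,
    Finset.prod_pair hij, hposi, hposj] at h
  exact h.trans_le (M.lintegral_g_mul_g_le hr hR hxy)

lemma Model.measurable_fewNbrsProb (M : Model d P) {r : ℝ} (hr : 0 < r) (T : Finset ℕ) (K : ℕ)
    (i : S) : Measurable (M.fewNbrsProb r T K i) := by
  have hmarks : Measurable fun ω (k : T) => M.mark S k ω :=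
    measurable_pi_lambda _ fun k => M.measurable_mark S k
  have hset := measurableSet_lt (M.measurable_markCount_linkSet hr T i) (measurable_const (a := K))
  have := Measure.isProbabilityMeasure_map (μ := P) hmarks.aemeasurable
  convert measurable_measure_prodMk_left (ν := P.map fun ω (k : T) => M.mark S k ω) hset using 2
  exact (Measure.map_apply hmarks (measurable_prodMk_left hset)).symm

lemma Model.measure_nbrCount_lt (M : Model d P) {r : ℝ} (hr : 0 < r) (hS : ∀ i ∈ S, 1 ≤ i)
    (hT : ∀ k ∈ T, 1 ≤ k ∧ k ∉ S) (i : S) (K : ℕ) :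
    P {ω | M.nbrCount r T i ω < K} = ∫⁻ x in cube d, M.fewNbrsProb r T K i x := by
  have hind : IndepFun (M.X i) (fun ω (k : T) => M.mark S k ω) P :=
    (M.indepFun_X_mark hS hT).comp (measurable_pi_apply i) measurable_id
  have h := measure_prodMk_mem_eq_lintegral (M.X_meas i)
    (measurable_pi_lambda _ fun k : T => M.measurable_mark S k) hind
    (measurableSet_lt (M.measurable_markCount_linkSet hr T i) (measurable_const (a := K)))
  simp only [Set.mem_ofPred_eq, M.markCount_linkSet, M.X_unif i (hS i i.2)] at h
  exact h

lemma Model.measure_nbrCount_lt_and_lt (M : Model d P) {r : ℝ} (hr : 0 < r)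
    (hS : ∀ i ∈ S, 1 ≤ i) (hT : ∀ k ∈ T, 1 ≤ k ∧ k ∉ S) {i j : S} (hij : (i : ℕ) ≠ j) (K : ℕ) :
    P {ω | M.nbrCount r T i ω < K ∧ M.nbrCount r T j ω < K} =
      ∫⁻ p, P {ω | markCount Finset.univ (M.linkSet r i p.1) (fun k : T => M.mark S k ω) < K ∧
          markCount Finset.univ (M.linkSet r j p.2) (fun k : T => M.mark S k ω) < K}
        ∂((volume.restrict (cube d)).prod (volume.restrict (cube d))) := by
  have hind : IndepFun (fun ω => (M.X i ω, M.X j ω)) (fun ω (k : T) => M.mark S k ω) P :=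
    (M.indepFun_X_mark hS hT).comp
      ((measurable_pi_apply i).prodMk (measurable_pi_apply j)) measurable_id
  have hi := (M.measurable_markCount_linkSet hr T i).comp (by fun_prop : Measurable
    fun q : (EuclideanSpace ℝ (Fin d) × EuclideanSpace ℝ (Fin d)) ×
      (T → EuclideanSpace ℝ (Fin d) × (S → ℝ)) => (q.1.1, q.2))
  have hj := (M.measurable_markCount_linkSet hr T j).comp (by fun_prop : Measurable
    fun q : (EuclideanSpace ℝ (Fin d) × EuclideanSpace ℝ (Fin d)) ×
      (T → EuclideanSpace ℝ (Fin d) × (S → ℝ)) => (q.1.2, q.2))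
  have h := measure_prodMk_mem_eq_lintegral ((M.X_meas i).prodMk (M.X_meas j))
    (measurable_pi_lambda _ fun k : T => M.measurable_mark S k) hind
    ((measurableSet_lt hi (measurable_const (a := K))).inter
      (measurableSet_lt hj (measurable_const (a := K))))
  simp only [Set.mem_inter_iff, Set.mem_ofPred_eq, Function.comp_apply, M.markCount_linkSet,
    M.map_X_prodMk (hS i i.2) (hS j j.2) hij] at h
  exact h

lemma Model.choose_mul_le_measureReal_nbrCount_lt (M : Model d P) {r : ℝ} (hr : 0 < r)
    (ha : M.α * r ^ d ≤ 1) {i : ℕ} (hi : 1 ≤ i) (hT : ∀ k ∈ T, 1 ≤ k ∧ i ≠ k) (K : ℕ) :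
    (T.card.choose K : ℝ) * (M.α * r ^ d) ^ K * (1 - M.α * r ^ d) ^ (T.card - K) ≤
      P.real {ω | M.nbrCount r T i ω < K + 1} := by
  have hprob := isProbabilityMeasure_cube M
  have ha₀ : 0 ≤ M.α * r ^ d := mul_nonneg M.α_pos.le (by positivity)
  let i' : ({i} : Finset ℕ) := ⟨i, Finset.mem_singleton_self i⟩
  have hS : ∀ j ∈ ({i} : Finset ℕ), 1 ≤ j := by simpa using hi
  have hT' : ∀ k ∈ T, 1 ≤ k ∧ k ∉ ({i} : Finset ℕ) := by simpa [eq_comm] using hT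
  have hcond : ∀ x, ENNReal.ofReal ((T.card.choose K : ℝ) * (M.α * r ^ d) ^ K *
      (1 - M.α * r ^ d) ^ (T.card - K)) ≤ M.fewNbrsProb r T (K + 1) i' x := fun x => by
    have h := choose_mul_le_measureReal_markCount_lt (fun k : T => M.measurable_mark {i} k)
      (M.iIndepFun_mark hS hT') (M.measurableSet_linkSet hr i' x) ⟨ha₀, ha⟩ (s := Finset.univ)
      (fun k _ => ENNReal.toReal_le_of_le_ofReal ha₀
        (M.measure_mark_linkSet_le hr hi (hT k k.2).1 (hT k k.2).2 x)) K
    rw [Finset.card_univ, Fintype.card_coe] at h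
    exact (ENNReal.ofReal_le_iff_le_toReal (measure_ne_top _ _)).2 h
  refine (ENNReal.ofReal_le_iff_le_toReal (measure_ne_top _ _)).1 ?_
  calc _ = ∫⁻ _x in cube d, ENNReal.ofReal ((T.card.choose K : ℝ) * (M.α * r ^ d) ^ K *
        (1 - M.α * r ^ d) ^ (T.card - K)) := by rw [lintegral_const, measure_univ, mul_one]
    _ ≤ ∫⁻ x in cube d, M.fewNbrsProb r T (K + 1) i' x := lintegral_mono hcond
    _ = P {ω | M.nbrCount r T i ω < K + 1} := (M.measure_nbrCount_lt hr hS hT' i' (K + 1)).symm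

lemma Model.measureReal_U_le_g_le (M : Model d P) {r : ℝ} (hr : 0 < r) (ha : M.α * r ^ d ≤ 1)
    {i j : ℕ} (hi : 1 ≤ i) (hj : 1 ≤ j) (hij : i ≠ j) :
    P.real {ω | M.U (min i j) (max i j) ω ≤ M.g (torusDist (M.X i ω) (M.X j ω) / r)} ≤
      M.α * r ^ d := by
  have hcompl : {ω | M.U (min i j) (max i j) ω ≤ M.g (torusDist (M.X i ω) (M.X j ω) / r)} =
      {ω | M.nbrCount r {j} i ω < 0 + 1}ᶜ := by
    ext ω
    simp [Model.nbrCount, Finset.filter_singleton]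
  have h := M.choose_mul_le_measureReal_nbrCount_lt hr ha hi (T := {j}) (by simpa using ⟨hj, hij⟩) 0
  rw [hcompl, probReal_compl_eq_one_sub
    (measurableSet_lt (M.measurable_nbrCount hr _ i) measurable_const)]
  simp only [Finset.card_singleton, Nat.choose_zero_right, pow_zero, Nat.sub_zero, pow_one] at h
  push_cast at h
  linarith

lemma Model.measure_markCount_lt_and_lt_le_of_far (M : Model d P) {r R : ℝ} (hr : 0 < r)
    (hR : 0 ≤ R) (hS : ∀ i ∈ S, 1 ≤ i) (hT : ∀ k ∈ T, 1 ≤ k ∧ k ∉ S) {i j : S}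
    (hij : (i : ℕ) ≠ j) (K : ℕ) {x y : EuclideanSpace ℝ (Fin d)} (hxy : R ≤ torusDist x y) :
    P {ω | markCount Finset.univ (M.linkSet r i x) (fun k : T => M.mark S k ω) < K ∧
        markCount Finset.univ (M.linkSet r j y) (fun k : T => M.mark S k ω) < K} ≤
      (M.fewNbrsProb r T K i x + T.card * ENNReal.ofReal (2 * M.g (R / (2 * r)) * (M.α * r ^ d))) *
      (M.fewNbrsProb r T K j y +
        T.card * ENNReal.ofReal (2 * M.g (R / (2 * r)) * (M.α * r ^ d))) := by
  set A := M.linkSet r i x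
  set B := M.linkSet r j y
  have hA : MeasurableSet A := M.measurableSet_linkSet hr i x
  have hB : MeasurableSet B := M.measurableSet_linkSet hr j y
  have hne : ∀ (l : S) {k : ℕ}, k ∈ T → (l : ℕ) ≠ k := fun l k hk h => (hT k hk).2 (h ▸ l.2)
  have hcommon : ∀ k ∈ (Finset.univ : Finset T), P (M.mark S k ⁻¹' (A ∩ B)) ≤
      ENNReal.ofReal (2 * M.g (R / (2 * r)) * (M.α * r ^ d)) := fun k _ =>
    M.measure_mark_linkSet_inter_le hr hR (hS i i.2) (hS j j.2) hij (hT k k.2).1 (hne i k.2)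
      (hne j k.2) hxy
  have hneg := measureReal_markCount_lt_and_lt_le (fun k : T => M.measurable_mark S k)
    (M.iIndepFun_mark hS hT) (hA.diff hB) (hB.diff hA) disjoint_sdiff_sdiff Finset.univ K K
  simp only [measureReal_def, ← ENNReal.toReal_mul] at hneg
  have hcard : ((Finset.univ : Finset T).card : ENNReal) = T.card := by
    rw [Finset.card_univ, Fintype.card_coe]
  calc _ ≤ P {ω | markCount Finset.univ (A \ B) (fun k : T => M.mark S k ω) < K ∧
        markCount Finset.univ (B \ A) (fun k : T => M.mark S k ω) < K} :=
        measure_mono fun ω hω =>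
          ⟨(markCount_mono subset_rfl Set.sdiff_subset _).trans_lt hω.1,
            (markCount_mono subset_rfl Set.sdiff_subset _).trans_lt hω.2⟩
    _ ≤ P {ω | markCount Finset.univ (A \ B) (fun k : T => M.mark S k ω) < K} *
        P {ω | markCount Finset.univ (B \ A) (fun k : T => M.mark S k ω) < K} :=
        (ENNReal.toReal_le_toReal (measure_ne_top _ _)
          (ENNReal.mul_ne_top (measure_ne_top _ _) (measure_ne_top _ _))).1 hneg
    _ ≤ _ := by
        rw [← hcard]
        refine mul_le_mul' (measure_markCount_sdiff_lt_le hcommon K)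
          (measure_markCount_sdiff_lt_le (fun k hk => ?_) K)
        rw [Set.inter_comm]
        exact hcommon k hk

lemma lintegral_prod_le_of_near_far {E : Type*} [MeasurableSpace E] {μ : Measure E}
    [IsProbabilityMeasure μ] {f h : E → ENNReal} (hf : Measurable f) (hh : Measurable h)
    {ψ : E × E → ENNReal} {near : Set (E × E)} (hmeas : MeasurableSet near) {v s : ENNReal}
    (hv : ∀ x, μ {y | (x, y) ∈ near} ≤ v) (hnear : ∀ p, ψ p ≤ f p.1)
    (hfar : ∀ p, p ∉ near → ψ p ≤ (f p.1 + s) * (h p.2 + s)) :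
    ∫⁻ p, ψ p ∂(μ.prod μ) ≤
      (∫⁻ x, f x ∂μ) * v + (∫⁻ x, f x ∂μ + s) * (∫⁻ y, h y ∂μ + s) := by
  have hfnear : Measurable (near.indicator fun p => f p.1) :=
    (hf.comp measurable_fst).indicator hmeas
  have hnear_le : ∫⁻ p, near.indicator (fun p => f p.1) p ∂(μ.prod μ) ≤ (∫⁻ x, f x ∂μ) * v := by
    rw [lintegral_prod _ hfnear.aemeasurable, ← lintegral_mul_const _ hf]
    refine lintegral_mono fun x => ?_
    calc ∫⁻ y, near.indicator (fun p => f p.1) (x, y) ∂μ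
        = ∫⁻ y, {y | (x, y) ∈ near}.indicator (fun _ => f x) y ∂μ := rfl
      _ = f x * μ {y | (x, y) ∈ near} :=
          lintegral_indicator_const (measurable_prodMk_left hmeas) _
      _ ≤ f x * v := by gcongr; exact hv x
  have hfar_eq : ∫⁻ p, (f p.1 + s) * (h p.2 + s) ∂(μ.prod μ) =
      (∫⁻ x, f x ∂μ + s) * (∫⁻ y, h y ∂μ + s) := by
    rw [lintegral_prod_mul (hf.add_const s).aemeasurable (hh.add_const s).aemeasurable,
      lintegral_add_left hf, lintegral_add_left hh, lintegral_const, measure_univ, mul_one]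
  calc ∫⁻ p, ψ p ∂(μ.prod μ)
      ≤ ∫⁻ p, near.indicator (fun p => f p.1) p + (f p.1 + s) * (h p.2 + s) ∂(μ.prod μ) := by
        refine lintegral_mono fun p => ?_
        by_cases hp : p ∈ near
        · rw [Set.indicator_of_mem hp]
          exact le_add_right (hnear p)
        · rw [Set.indicator_of_notMem hp, zero_add]
          exact hfar p hp
    _ = (∫⁻ p, near.indicator (fun p => f p.1) p ∂(μ.prod μ)) +
          ∫⁻ p, (f p.1 + s) * (h p.2 + s) ∂(μ.prod μ) := lintegral_add_left hfnear _
    _ ≤ _ := add_le_add hnear_le hfar_eq.le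

lemma Model.measure_nbrCount_lt_and_lt_le (M : Model d P) {r R : ℝ} (hr : 0 < r) (hR : 0 ≤ R)
    {i j : ℕ} (hi : 1 ≤ i) (hj : 1 ≤ j) (hij : i ≠ j)
    (hT : ∀ k ∈ T, 1 ≤ k ∧ i ≠ k ∧ j ≠ k) (K : ℕ) :
    P {ω | M.nbrCount r T i ω < K ∧ M.nbrCount r T j ω < K} ≤
      P {ω | M.nbrCount r T i ω < K} * volume (Metric.ball (0 : EuclideanSpace ℝ (Fin d)) R) +
      (P {ω | M.nbrCount r T i ω < K} +
        T.card * ENNReal.ofReal (2 * M.g (R / (2 * r)) * (M.α * r ^ d))) *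
      (P {ω | M.nbrCount r T j ω < K} +
        T.card * ENNReal.ofReal (2 * M.g (R / (2 * r)) * (M.α * r ^ d))) := by
  have hprob := isProbabilityMeasure_cube M
  let i' : ({i, j} : Finset ℕ) := ⟨i, Finset.mem_insert_self i {j}⟩
  let j' : ({i, j} : Finset ℕ) := ⟨j, Finset.mem_insert_of_mem (Finset.mem_singleton_self j)⟩
  have hS : ∀ l ∈ ({i, j} : Finset ℕ), 1 ≤ l := by simpa using ⟨hi, hj⟩
  have hT' : ∀ k ∈ T, 1 ≤ k ∧ k ∉ ({i, j} : Finset ℕ) := by simpa [eq_comm] using hT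
  rw [M.measure_nbrCount_lt_and_lt hr hS hT' (i := i') (j := j') hij K,
    M.measure_nbrCount_lt hr hS hT' i' K, M.measure_nbrCount_lt hr hS hT' j' K]
  refine lintegral_prod_le_of_near_far (near := {p | torusDist p.1 p.2 < R})
    (M.measurable_fewNbrsProb hr T K i') (M.measurable_fewNbrsProb hr T K j')
    (measurableSet_lt measurable_torusDist measurable_const) ?_ ?_ ?_
  · exact volume_cube_torusDist_lt_le R
  · exact fun p => measure_mono fun ω hω => hω.1
  · exact fun p hp =>
      M.measure_markCount_lt_and_lt_le_of_far hr hR hS hT' hij K (not_lt.1 hp)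

end NeighbourCounts

section SecondMoment

/-- The event that vertex `i` has at most `K` neighbours among `1, …, m`. -/
def Model.lowDegree (M : Model d P) (r : ℝ) (m K i : ℕ) : Set Ω :=
  {ω | M.nbrCount r ((Finset.Icc 1 m).erase i) i ω < K + 1}

lemma Model.measurableSet_lowDegree (M : Model d P) {r : ℝ} (hr : 0 < r) (m K i : ℕ) :
    MeasurableSet (M.lowDegree r m K i) :=
  measurableSet_lt (M.measurable_nbrCount hr _ i) measurable_const

lemma memLp_indicator_one [IsFiniteMeasure P] {A : Set Ω} (hA : MeasurableSet A) :
    MemLp (A.indicator (1 : Ω → ℝ)) 2 P :=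
  memLp_indicator_const 2 hA 1 (Or.inr (measure_ne_top P A))

variable [IsProbabilityMeasure P]

lemma covariance_indicator_one {A B : Set Ω} (hA : MeasurableSet A) (hB : MeasurableSet B) :
    cov[A.indicator (1 : Ω → ℝ), B.indicator (1 : Ω → ℝ); P] =
      P.real (A ∩ B) - P.real A * P.real B := by
  rw [covariance_eq_sub (memLp_indicator_one hA) (memLp_indicator_one hB),
    ← Set.inter_indicator_one, integral_indicator_one (hA.inter hB), integral_indicator_one hA,
    integral_indicator_one hB]

lemma variance_sum_indicator_one_le {ι : Type*} {s : Finset ι} {A : ι → Set Ω}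
    (hA : ∀ i ∈ s, MeasurableSet (A i)) {τ : ℝ} (hτ : 0 ≤ τ)
    (hpair : ∀ i ∈ s, ∀ j ∈ s, i ≠ j →
      P.real (A i ∩ A j) ≤ (1 + τ) * (P.real (A i) * P.real (A j))) :
    Var[fun ω => ∑ i ∈ s, (A i).indicator (1 : Ω → ℝ) ω; P] ≤
      ∑ i ∈ s, P.real (A i) + τ * (∑ i ∈ s, P.real (A i)) ^ 2 := by
  classical
  rw [variance_fun_sum' fun i hi => memLp_indicator_one (hA i hi)]
  have hcov : ∀ i ∈ s, ∀ j ∈ s,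
      cov[(A i).indicator (1 : Ω → ℝ), (A j).indicator (1 : Ω → ℝ); P] ≤
        (if i = j then P.real (A i) else 0) + τ * (P.real (A i) * P.real (A j)) := by
    intro i hi j hj
    rw [covariance_indicator_one (hA i hi) (hA j hj)]
    have hmul : 0 ≤ P.real (A i) * P.real (A j) := by positivity
    rcases eq_or_ne i j with rfl | hij
    · rw [if_pos rfl, Set.inter_self]
      linarith [mul_nonneg hτ hmul]
    · rw [if_neg hij]
      linarith [hpair i hi j hj hij]
  calc ∑ i ∈ s, ∑ j ∈ s, cov[(A i).indicator (1 : Ω → ℝ), (A j).indicator (1 : Ω → ℝ); P]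
      ≤ ∑ i ∈ s, ∑ j ∈ s,
          ((if i = j then P.real (A i) else 0) + τ * (P.real (A i) * P.real (A j))) :=
        Finset.sum_le_sum fun i hi => Finset.sum_le_sum (hcov i hi)
    _ = ∑ i ∈ s, P.real (A i) + τ * (∑ i ∈ s, P.real (A i)) ^ 2 := by
        simp only [Finset.sum_add_distrib, ← Finset.mul_sum, ← Finset.sum_mul, sq]
        congr 1
        exact Finset.sum_congr rfl fun i hi => by rw [Finset.sum_ite_eq, if_pos hi]

lemma measureReal_biInter_compl_le {ι : Type*} {s : Finset ι} {A : ι → Set Ω}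
    (hA : ∀ i ∈ s, MeasurableSet (A i)) {τ : ℝ} (hτ : 0 ≤ τ)
    (hpair : ∀ i ∈ s, ∀ j ∈ s, i ≠ j →
      P.real (A i ∩ A j) ≤ (1 + τ) * (P.real (A i) * P.real (A j)))
    (hpos : 0 < ∑ i ∈ s, P.real (A i)) :
    P.real (⋂ i ∈ s, (A i)ᶜ) ≤ 1 / (∑ i ∈ s, P.real (A i)) + τ := by
  set Y : Ω → ℝ := fun ω => ∑ i ∈ s, (A i).indicator 1 ω
  set σ := ∑ i ∈ s, P.real (A i)
  have hY : MemLp Y 2 P := memLp_finsetSum _ fun i hi => memLp_indicator_one (hA i hi)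
  have hmean : P[Y] = σ := by
    rw [integral_finsetSum _ fun i hi => (memLp_indicator_one (hA i hi)).integrable one_le_two]
    exact Finset.sum_congr rfl fun i hi => integral_indicator_one (hA i hi)
  have hsub : (⋂ i ∈ s, (A i)ᶜ) ⊆ {ω | σ ≤ |Y ω - P[Y]|} := fun ω hω => by
    have hYω : Y ω = 0 := Finset.sum_eq_zero fun i hi =>
      Set.indicator_of_notMem (Set.mem_iInter₂.1 hω i hi) _
    rw [Set.mem_ofPred_eq, hmean, hYω, zero_sub, abs_neg, abs_of_pos hpos]
  calc P.real (⋂ i ∈ s, (A i)ᶜ) ≤ Var[Y; P] / σ ^ 2 :=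
        ENNReal.toReal_le_of_le_ofReal (div_nonneg (variance_nonneg _ _) (sq_nonneg _))
          ((measure_mono hsub).trans (meas_ge_le_variance_div_sq hY hpos))
    _ ≤ (σ + τ * σ ^ 2) / σ ^ 2 := by
        gcongr
        exact variance_sum_indicator_one_le hA hτ hpair
    _ = 1 / σ + τ := by field_simp

lemma Model.measureReal_nbrCount_erase_lt_le (M : Model d P) {r : ℝ} (hr : 0 < r)
    (ha : M.α * r ^ d ≤ 1) {i j : ℕ} (hi : 1 ≤ i) (hj : 1 ≤ j) (hij : i ≠ j) (T : Finset ℕ)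
    (K : ℕ) :
    P.real {ω | M.nbrCount r (T.erase j) i ω < K} ≤
      P.real {ω | M.nbrCount r T i ω < K} + M.α * r ^ d := by
  have hsub : {ω | M.nbrCount r (T.erase j) i ω < K} ⊆ {ω | M.nbrCount r T i ω < K} ∪
      {ω | M.U (min i j) (max i j) ω ≤ M.g (torusDist (M.X i ω) (M.X j ω) / r)} := by
    refine fun ω hω => or_iff_not_imp_right.2 fun hnot => ?_
    refine LE.le.trans_lt (b := M.nbrCount r (T.erase j) i ω)
      (Finset.card_le_card fun k hk => ?_) hω
    rw [Finset.mem_filter] at hk ⊢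
    exact ⟨Finset.mem_erase_of_ne_of_mem (fun hkj => hnot (hkj ▸ hk.2)) hk.1, hk.2⟩
  exact ((measureReal_mono hsub).trans (measureReal_union_le _ _)).trans
    (add_le_add_right (M.measureReal_U_le_g_le hr ha hi hj hij) _)

lemma Model.measureReal_nbrCount_lt_and_lt_le (M : Model d P) {r R : ℝ} (hr : 0 < r)
    (hR : 0 ≤ R) {T : Finset ℕ} {i j : ℕ} (hi : 1 ≤ i) (hj : 1 ≤ j) (hij : i ≠ j)
    (hT : ∀ k ∈ T, 1 ≤ k ∧ i ≠ k ∧ j ≠ k) (K : ℕ) :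
    P.real {ω | M.nbrCount r T i ω < K ∧ M.nbrCount r T j ω < K} ≤
      P.real {ω | M.nbrCount r T i ω < K} *
        volume.real (Metric.ball (0 : EuclideanSpace ℝ (Fin d)) R) +
      (P.real {ω | M.nbrCount r T i ω < K} +
        T.card * (2 * M.g (R / (2 * r)) * (M.α * r ^ d))) *
      (P.real {ω | M.nbrCount r T j ω < K} +
        T.card * (2 * M.g (R / (2 * r)) * (M.α * r ^ d))) := by
  have hs : 0 ≤ 2 * M.g (R / (2 * r)) * (M.α * r ^ d) :=
    mul_nonneg (mul_nonneg zero_le_two (M.g_mem _ (by positivity)).1)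
      (mul_nonneg M.α_pos.le (by positivity))
  have h := ENNReal.toReal_mono (by finiteness)
    (M.measure_nbrCount_lt_and_lt_le hr hR hi hj hij hT K)
  rwa [ENNReal.toReal_add (by finiteness) (by finiteness), ENNReal.toReal_mul, ENNReal.toReal_mul,
    ENNReal.toReal_add (by finiteness) (by finiteness),
    ENNReal.toReal_add (by finiteness) (by finiteness), ENNReal.toReal_mul,
    ENNReal.toReal_ofReal hs, ENNReal.toReal_natCast] at h

lemma Model.measureReal_lowDegree_inter_le (M : Model d P) {r R : ℝ} (hr : 0 < r) (hR : 0 ≤ R)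
    (ha : M.α * r ^ d ≤ 1) {m i j : ℕ} (hi : 1 ≤ i) (hj : 1 ≤ j) (hij : i ≠ j) (K : ℕ) :
    P.real (M.lowDegree r m K i ∩ M.lowDegree r m K j) ≤
      (P.real (M.lowDegree r m K i) + M.α * r ^ d) *
        volume.real (Metric.ball (0 : EuclideanSpace ℝ (Fin d)) R) +
      (P.real (M.lowDegree r m K i) + (M.α * r ^ d +
        m * (2 * M.g (R / (2 * r)) * (M.α * r ^ d)))) *
      (P.real (M.lowDegree r m K j) + (M.α * r ^ d +
        m * (2 * M.g (R / (2 * r)) * (M.α * r ^ d)))) := by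
  set T := ((Finset.Icc 1 m).erase i).erase j with hTdef
  have hTcomm : T = ((Finset.Icc 1 m).erase j).erase i := Finset.erase_right_comm
  have hT : ∀ k ∈ T, 1 ≤ k ∧ i ≠ k ∧ j ≠ k := fun k hk => by
    simp only [hTdef, Finset.mem_erase, Finset.mem_Icc] at hk
    omega
  have hcard : T.card ≤ m := by
    simpa [T] using
      Finset.card_le_card ((Finset.erase_subset j _).trans (Finset.erase_subset i (Finset.Icc 1 m)))
  have hg : 0 ≤ M.g (R / (2 * r)) := (M.g_mem _ (by positivity)).1
  have hα : 0 ≤ M.α * r ^ d := mul_nonneg M.α_pos.le (by positivity)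
  have hsub : M.lowDegree r m K i ∩ M.lowDegree r m K j ⊆
      {ω | M.nbrCount r T i ω < K + 1 ∧ M.nbrCount r T j ω < K + 1} := fun ω hω =>
    ⟨(M.nbrCount_mono r (Finset.erase_subset _ _) i ω).trans_lt hω.1,
      (M.nbrCount_mono r (hTcomm ▸ Finset.erase_subset _ _) j ω).trans_lt hω.2⟩
  have hpi : P.real {ω | M.nbrCount r T i ω < K + 1} ≤
      P.real (M.lowDegree r m K i) + M.α * r ^ d :=
    M.measureReal_nbrCount_erase_lt_le hr ha hi hj hij _ _
  have hpj : P.real {ω | M.nbrCount r T j ω < K + 1} ≤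
      P.real (M.lowDegree r m K j) + M.α * r ^ d := by
    rw [hTcomm]
    exact M.measureReal_nbrCount_erase_lt_le hr ha hj hi hij.symm _ _
  calc _ ≤ P.real {ω | M.nbrCount r T i ω < K + 1 ∧ M.nbrCount r T j ω < K + 1} :=
        measureReal_mono hsub
    _ ≤ _ := M.measureReal_nbrCount_lt_and_lt_le hr hR hi hj hij hT (K + 1)
    _ ≤ _ := by
        simp only [← add_assoc]
        gcongr

lemma Model.choose_mul_le_measureReal_lowDegree (M : Model d P) {r : ℝ} (hr : 0 < r)
    (ha : M.α * r ^ d ≤ 1) {m i : ℕ} (hi : i ∈ Finset.Icc 1 m) (K : ℕ) :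
    ((m - 1).choose K : ℝ) * (M.α * r ^ d) ^ K * (1 - M.α * r ^ d) ^ (m - 1 - K) ≤
      P.real (M.lowDegree r m K i) := by
  have h := M.choose_mul_le_measureReal_nbrCount_lt hr ha (Finset.mem_Icc.1 hi).1
    (T := (Finset.Icc 1 m).erase i) (fun k hk => by
      simp only [Finset.mem_erase, Finset.mem_Icc] at hk
      omega) K
  rwa [Finset.card_erase_of_mem hi, Nat.card_Icc, Nat.add_sub_cancel] at h

lemma mul_add_mul_le_of_le_mul {p q a v e θ : ℝ} (hp : 0 ≤ p) (hq : 0 ≤ q) (ha : 0 ≤ a)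
    (hv : 0 ≤ v) (hθ : 0 ≤ θ) (hθ₁ : θ ≤ 1) (hae : a ≤ e) (hvq : v ≤ θ * q) (hep : e ≤ θ * p)
    (heq : e ≤ θ * q) :
    (p + a) * v + (p + e) * (q + e) ≤ (1 + 5 * θ) * (p * q) := by
  calc (p + a) * v + (p + e) * (q + e)
      ≤ (p + θ * p) * (θ * q) + (p + θ * p) * (q + θ * q) := by
        gcongr
        · exact hae.trans hep
        · exact add_nonneg hq (ha.trans hae)
    _ = (1 + 3 * θ + 2 * (θ * θ)) * (p * q) := by ring
    _ ≤ (1 + 5 * θ) * (p * q) := by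
        refine mul_le_mul_of_nonneg_right ?_ (mul_nonneg hp hq)
        nlinarith

lemma Model.measureReal_biInter_lowDegree_compl_le (M : Model d P) {r R : ℝ} (hr : 0 < r)
    (hR : 0 ≤ R) {m m' K : ℕ} (hm' : 1 ≤ m') (hmm : m' ≤ m) {L θ : ℝ} (hL : 0 < L) (hθ : 0 ≤ θ)
    (hθ₁ : θ ≤ 1) (ha : M.α * r ^ d ≤ 1)
    (hLle : L ≤ ((m - 1).choose K : ℝ) * (M.α * r ^ d) ^ K * (1 - M.α * r ^ d) ^ (m - 1 - K))
    (hball : volume.real (Metric.ball (0 : EuclideanSpace ℝ (Fin d)) R) ≤ θ * L)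
    (hcommon : M.α * r ^ d + m * (2 * M.g (R / (2 * r)) * (M.α * r ^ d)) ≤ θ * L) :
    P.real (⋂ i ∈ Finset.Icc 1 m', (M.lowDegree r m K i)ᶜ) ≤ 1 / (m' * L) + 5 * θ := by
  have hα : 0 ≤ M.α * r ^ d := mul_nonneg M.α_pos.le (by positivity)
  have hcommon₀ : 0 ≤ m * (2 * M.g (R / (2 * r)) * (M.α * r ^ d)) :=
    mul_nonneg m.cast_nonneg (mul_nonneg (mul_nonneg zero_le_two (M.g_mem _ (by positivity)).1) hα)
  have hp : ∀ i ∈ Finset.Icc 1 m', L ≤ P.real (M.lowDegree r m K i) := fun i hi =>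
    hLle.trans (M.choose_mul_le_measureReal_lowDegree hr ha
      (Finset.Icc_subset_Icc_right hmm hi) K)
  have hθp : ∀ i ∈ Finset.Icc 1 m', θ * L ≤ θ * P.real (M.lowDegree r m K i) := fun i hi =>
    mul_le_mul_of_nonneg_left (hp i hi) hθ
  have hpair : ∀ i ∈ Finset.Icc 1 m', ∀ j ∈ Finset.Icc 1 m', i ≠ j →
      P.real (M.lowDegree r m K i ∩ M.lowDegree r m K j) ≤
        (1 + 5 * θ) * (P.real (M.lowDegree r m K i) * P.real (M.lowDegree r m K j)) :=
    fun i hi j hj hij =>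
      (M.measureReal_lowDegree_inter_le hr hR ha (Finset.mem_Icc.1 hi).1 (Finset.mem_Icc.1 hj).1
        hij K).trans
      (mul_add_mul_le_of_le_mul measureReal_nonneg measureReal_nonneg hα measureReal_nonneg hθ hθ₁
        (le_add_of_nonneg_right hcommon₀) (hball.trans (hθp j hj)) (hcommon.trans (hθp i hi))
        (hcommon.trans (hθp j hj)))
  have hsum : m' * L ≤ ∑ i ∈ Finset.Icc 1 m', P.real (M.lowDegree r m K i) := by
    simpa using Finset.card_nsmul_le_sum _ _ _ hp
  have hpos : 0 < m' * L := mul_pos (by exact_mod_cast hm') hL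
  calc _ ≤ 1 / (∑ i ∈ Finset.Icc 1 m', P.real (M.lowDegree r m K i)) + 5 * θ :=
        measureReal_biInter_compl_le (fun i _ => M.measurableSet_lowDegree hr m K i)
          (by positivity) hpair (hpos.trans_le hsum)
    _ ≤ 1 / (m' * L) + 5 * θ := by gcongr

end SecondMoment

section PoissonTails

lemma hasSum_poisson_mul_exp (a t : ℝ) :
    HasSum (fun k : ℕ => Real.exp (-a) * a ^ k / k.factorial * Real.exp (t * k))
      (Real.exp (a * (Real.exp t - 1))) := by
  have h := (NormedSpace.expSeries_div_hasSum_exp (a * Real.exp t)).mul_left (Real.exp (-a))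
  rw [← Real.exp_eq_exp_ℝ, ← Real.exp_add] at h
  convert! h using 2 with k
  · rw [mul_pow, ← Real.exp_nat_mul, mul_comm t]
    ring
  · ring

lemma Model.map_N (M : Model d P) (n : ℕ) : P.map (M.N n) = poissonMeasure n := by
  refine Measure.ext_of_singleton fun k => ?_
  rw [Measure.map_apply (M.N_meas n) (measurableSet_singleton k), poissonMeasure_singleton,
    NNReal.coe_natCast]
  exact M.N_poisson n k

lemma Model.integrable_exp_N (M : Model d P) (n : ℕ) (t : ℝ) :
    Integrable (fun ω => Real.exp (t * M.N n ω)) P := by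
  have h : Integrable (fun k : ℕ => Real.exp (t * k)) (P.map (M.N n)) := by
    rw [M.map_N, integrable_poissonMeasure_iff]
    simpa using (hasSum_poisson_mul_exp n t).summable
  exact h.comp_measurable (M.N_meas n)

lemma Model.mgf_N (M : Model d P) (n : ℕ) (t : ℝ) :
    mgf (fun ω => (M.N n ω : ℝ)) P t = Real.exp (n * (Real.exp t - 1)) := by
  calc mgf (fun ω => (M.N n ω : ℝ)) P t = ∫ k : ℕ, Real.exp (t * k) ∂(P.map (M.N n)) :=
        (integral_map (f := fun k : ℕ => Real.exp (t * k)) (M.N_meas n).aemeasurable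
          .of_discrete).symm
    _ = Real.exp (n * (Real.exp t - 1)) := by
        rw [M.map_N, integral_poissonMeasure]
        simpa using (hasSum_poisson_mul_exp n t).tsum_eq

lemma exp_sub_one_le_add_sq {t : ℝ} (ht : |t| ≤ 1) : Real.exp t - 1 ≤ t + t ^ 2 := by
  linarith [le_abs_self (Real.exp t - 1 - t), Real.abs_exp_sub_one_sub_id_le ht]

variable [IsProbabilityMeasure P]

lemma Model.measureReal_one_add_mul_le_N_le (M : Model d P) {η : ℝ} (hη : 0 ≤ η) (hη₂ : η ≤ 2)
    (n : ℕ) : P.real {ω | (1 + η) * n ≤ M.N n ω} ≤ Real.exp (-(n * (η ^ 2 / 4))) := by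
  refine (measure_ge_le_exp_mul_mgf (t := η / 2) _ (by positivity)
    (M.integrable_exp_N n _)).trans ?_
  rw [M.mgf_N, ← Real.exp_add, Real.exp_le_exp]
  have h := exp_sub_one_le_add_sq (t := η / 2) (by rw [abs_of_nonneg] <;> linarith)
  linarith [mul_le_mul_of_nonneg_left h n.cast_nonneg (α := ℝ)]

lemma Model.measureReal_N_le_one_sub_mul_le (M : Model d P) {η : ℝ} (hη : 0 ≤ η) (hη₂ : η ≤ 2)
    (n : ℕ) : P.real {ω | (M.N n ω : ℝ) ≤ (1 - η) * n} ≤ Real.exp (-(n * (η ^ 2 / 4))) := by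
  refine (measure_le_le_exp_mul_mgf (t := -(η / 2)) _ (by linarith)
    (M.integrable_exp_N n _)).trans ?_
  rw [M.mgf_N, ← Real.exp_add, Real.exp_le_exp]
  have h := exp_sub_one_le_add_sq (t := -(η / 2)) (by rw [abs_neg, abs_of_nonneg] <;> linarith)
  linarith [mul_le_mul_of_nonneg_left h n.cast_nonneg (α := ℝ)]

end PoissonTails

section BinomialWeight

open Topology

lemma log_factorial_le {K : ℕ} (hK : 1 ≤ K) :
    Real.log K.factorial ≤ (K + 1) * Real.log K - K + 1 := by
  induction K, hK using Nat.le_induction with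
  | base => simp
  | succ K hK ih =>
    have : (0 : ℝ) < K := by exact_mod_cast hK
    have hlog : 1 ≤ (K + 1) * (Real.log (K + 1) - Real.log K) := by
      have h := Real.one_sub_inv_le_log_of_pos (x := (K + 1) / K) (by positivity)
      rw [Real.log_div (by positivity) (by positivity), inv_div] at h
      calc (1 : ℝ) = (K + 1) * (1 - K / (K + 1)) := by field_simp; ring
        _ ≤ _ := by gcongr
    rw [Nat.factorial_succ]
    push_cast
    rw [Real.log_mul (by positivity) (by positivity)]
    linarith

lemma exp_neg_mul_div_le_one_sub_pow {a : ℝ} (ha : a < 1) (m : ℕ) :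
    Real.exp (-(m * a / (1 - a))) ≤ (1 - a) ^ m := by
  have h₁ : 0 < 1 - a := sub_pos.2 ha
  have hlog : -(a / (1 - a)) ≤ Real.log (1 - a) := by
    convert! Real.one_sub_inv_le_log_of_pos h₁ using 1
    field_simp
    ring
  calc Real.exp (-(m * a / (1 - a))) = Real.exp (m * -(a / (1 - a))) := by ring_nf
    _ ≤ Real.exp (m * Real.log (1 - a)) := by gcongr
    _ = (1 - a) ^ m := by rw [Real.exp_nat_mul, Real.exp_log h₁]

lemma exp_le_choose_mul {m K : ℕ} {a : ℝ} (hK : 1 ≤ K) (hKm : K < m) (ha₀ : 0 < a) (ha₁ : a < 1) :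
    Real.exp (K * Real.log ((m - K) * a) - ((K + 1) * Real.log K - K + 1) - m * a / (1 - a)) ≤
      ((m - 1).choose K : ℝ) * a ^ K * (1 - a) ^ (m - 1 - K) := by
  have hmK : (0 : ℝ) < m - K := sub_pos.2 (by exact_mod_cast hKm)
  have h₁ : 0 < 1 - a := sub_pos.2 ha₁
  have hchoose : (m - K : ℝ) ^ K / K.factorial ≤ ((m - 1).choose K : ℝ) := by
    have h := Nat.pow_le_choose (α := ℝ) K (m - 1)
    rwa [show m - 1 + 1 - K = m - K by omega, Nat.cast_sub hKm.le] at h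
  have hfactorial : Real.exp (-((K + 1) * Real.log K - K + 1)) ≤ (K.factorial : ℝ)⁻¹ := by
    rw [Real.exp_neg]
    gcongr
    exact (Real.log_le_iff_le_exp (by positivity)).1 (log_factorial_le hK)
  have hpow : Real.exp (-(m * a / (1 - a))) ≤ (1 - a) ^ (m - 1 - K) :=
    (exp_neg_mul_div_le_one_sub_pow ha₁ m).trans
      (pow_le_pow_of_le_one h₁.le (by linarith) (by omega))
  rw [sub_eq_add_neg, sub_eq_add_neg, Real.exp_add, Real.exp_add, Real.exp_nat_mul,
    Real.exp_log (by positivity)]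
  calc _ ≤ ((m - K) * a) ^ K * (K.factorial : ℝ)⁻¹ * (1 - a) ^ (m - 1 - K) := by gcongr
    _ = (m - K : ℝ) ^ K / K.factorial * a ^ K * (1 - a) ^ (m - 1 - K) := by
        rw [mul_pow]; ring
    _ ≤ _ := by gcongr

lemma tendsto_sub_mul_div {ι : Type*} {f : Filter ι} {m K a l : ι → ℝ} {ρ κ : ℝ}
    (ha : Tendsto a f (𝓝 0)) (hm : Tendsto (fun k => m k * a k / l k) f (𝓝 ρ))
    (hK : Tendsto (fun k => K k / l k) f (𝓝 κ)) :
    Tendsto (fun k => (m k - K k) * a k / l k) f (𝓝 ρ) := by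
  have h := hm.sub (hK.mul ha)
  rw [mul_zero, sub_zero] at h
  exact h.congr fun k => by ring

lemma tendsto_log_choose_mul_div {ι : Type*} {f : Filter ι} {m K a l : ι → ℝ} {ρ κ : ℝ}
    (hρ : 0 < ρ) (hκ : 0 < κ) (hl : Tendsto l f atTop) (ha : Tendsto a f (𝓝 0))
    (hm : Tendsto (fun k => m k * a k / l k) f (𝓝 ρ))
    (hK : Tendsto (fun k => K k / l k) f (𝓝 κ)) :
    Tendsto (fun k => (K k * Real.log ((m k - K k) * a k) -
      ((K k + 1) * Real.log (K k) - K k + 1) - m k * a k / (1 - a k)) / l k) f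
      (𝓝 (-(ρ * H (κ / ρ)))) := by
  have hmK := tendsto_sub_mul_div ha hm hK
  have hl₀ := hl.eventually_gt_atTop 0
  have hKtop : Tendsto K f atTop := (hK.pos_mul_atTop hκ hl).congr' <| hl₀.mono fun k hk =>
    div_mul_cancel₀ (K k) hk.ne'
  have hlogK : Tendsto (fun k => Real.log (K k) / l k) f (𝓝 0) := by
    have h := (Real.isLittleO_log_id_atTop.tendsto_div_nhds_zero.comp hKtop).mul hK
    rw [zero_mul] at h
    refine h.congr' ((hKtop.eventually_gt_atTop 0).mono fun k hk => ?_)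
    simp only [Function.comp_apply, id]
    field_simp
  have hlim := ((((hK.mul ((hmK.log hρ.ne').sub (hK.log hκ.ne'))).sub hlogK).add hK).sub
    hl.inv_tendsto_atTop).sub (hm.div (ha.const_sub 1) (by norm_num))
  have hvalue : κ * (Real.log ρ - Real.log κ) - 0 + κ - 0 - ρ / (1 - 0) = -(ρ * H (κ / ρ)) := by
    rw [H, Real.log_div hκ.ne' hρ.ne']
    field_simp
    ring
  rw [hvalue] at hlim
  refine hlim.congr' ?_
  filter_upwards [hl₀, hKtop.eventually_gt_atTop 0, hmK.eventually_const_lt hρ] with k hlk hKk hmKk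
  have hpos : 0 < (m k - K k) * a k := (div_pos_iff_of_pos_right hlk).1 hmKk
  rw [Real.log_div hpos.ne' hlk.ne', Real.log_div hKk.ne' hlk.ne', Pi.inv_apply, Pi.div_apply]
  field_simp
  ring

lemma eventually_exp_neg_mul_le_choose_mul {ι : Type*} {f : Filter ι} {m K : ι → ℕ}
    {a l : ι → ℝ} {ρ κ β : ℝ} (hρ : 0 < ρ) (hκ : 0 < κ) (hl : Tendsto l f atTop)
    (ha : Tendsto a f (𝓝 0)) (hm : Tendsto (fun k => m k * a k / l k) f (𝓝 ρ))
    (hK : Tendsto (fun k => K k / l k) f (𝓝 κ)) (hβ : ρ * H (κ / ρ) < β) :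
    ∀ᶠ k in f, Real.exp (-(β * l k)) ≤
      ((m k - 1).choose (K k) : ℝ) * a k ^ K k * (1 - a k) ^ (m k - 1 - K k) := by
  have hlim := tendsto_log_choose_mul_div hρ hκ hl ha hm hK
  filter_upwards [hl.eventually_gt_atTop 0, ha.eventually_lt_const one_pos,
    hm.eventually_const_lt hρ, hK.eventually_const_lt hκ,
    (tendsto_sub_mul_div ha hm hK).eventually_const_lt hρ,
    hlim.eventually_const_lt (neg_lt_neg hβ)] with k hlk hak hmk hKk hmKk hexp
  have ha₀ : 0 < a k := pos_of_mul_pos_right ((div_pos_iff_of_pos_right hlk).1 hmk)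
    (m k).cast_nonneg
  have hK₁ : 1 ≤ K k := by exact_mod_cast (div_pos_iff_of_pos_right hlk).1 hKk
  have hKm : K k < m k := by
    have h := pos_of_mul_pos_left ((div_pos_iff_of_pos_right hlk).1 hmKk) ha₀.le
    exact_mod_cast sub_pos.1 h
  refine le_trans ?_ (exp_le_choose_mul hK₁ hKm ha₀ hak)
  rw [lt_div_iff₀ hlk, neg_mul] at hexp
  exact Real.exp_le_exp.2 hexp.le

end BinomialWeight

section Rate

open Topology

lemma H_one : H 1 = 0 := by simp [H]

lemma continuous_H : Continuous H :=
  (continuous_const.sub continuous_id).add Real.continuous_mul_log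

lemma convexOn_H : ConvexOn ℝ (Set.Ici 0) H :=
  ((convexOn_const (1 : ℝ) (convex_Ici 0)).sub (concaveOn_id (convex_Ici 0))).add
    Real.convexOn_mul_log

lemma Hminusinv_le_Hminusinv {y₁ y₂ : ℝ} (hy₁ : 0 ≤ y₁) (h : y₁ ≤ y₂) :
    Hminusinv y₂ ≤ Hminusinv y₁ :=
  csInf_le_csInf ⟨0, fun _ hx => hx.1⟩ ⟨1, zero_le_one, H_one.trans_le hy₁⟩
    fun _ hx => ⟨hx.1, hx.2.trans h⟩

lemma Hminusinv_div_add_le_Hminusinv_div_sub {c x γ : ℝ} (hx : 0 ≤ x) (hxc : 3 * x ≤ c)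
    (hγ : 0 < γ) : Hminusinv (c / (γ * (c + x))) ≤ Hminusinv ((c - 3 * x) / (γ * (c - x))) := by
  rcases hx.eq_or_lt with rfl | hx
  · simp
  have hsub : 0 < c - x := by linarith
  have hadd : 0 < c + x := by linarith
  refine Hminusinv_le_Hminusinv (div_nonneg (sub_nonneg.2 hxc) (by positivity)) ?_
  rw [mul_comm γ, mul_comm γ, ← div_div, ← div_div]
  refine div_le_div_of_nonneg_right ((div_le_div_iff₀ hsub hadd).2 ?_) hγ.le
  nlinarith [mul_pos hx hsub, mul_pos hx hx]

lemma exists_H_lt {y x₀ : ℝ} (hy : 0 < y) (h : Hminusinv y < x₀) :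
    ∃ x, 0 < x ∧ x < x₀ ∧ H x < y := by
  obtain ⟨x, ⟨hx, hHx⟩, hxx₀⟩ := exists_lt_of_csInf_lt
    (s := {x : ℝ | 0 ≤ x ∧ H x ≤ y}) ⟨1, zero_le_one, H_one.trans_le hy.le⟩ h
  have hcont : ContinuousAt (fun t : ℝ => (1 - t) * x + t * 1) 0 := by fun_prop
  have hlt : ∀ᶠ t in 𝓝[>] (0 : ℝ), (1 - t) * x + t * 1 < x₀ :=
    (hcont.eventually_lt continuousAt_const (by simpa using hxx₀)).filter_mono nhdsWithin_le_nhds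
  obtain ⟨t, htx₀, ht₀, ht₁⟩ := (hlt.and (Ioo_mem_nhdsGT (zero_lt_one' ℝ))).exists
  refine ⟨(1 - t) * x + t * 1, ?_, htx₀, ?_⟩
  · nlinarith
  · calc H ((1 - t) * x + t * 1) ≤ (1 - t) * H x + t * H 1 :=
          convexOn_H.2 hx (Set.mem_Ici.2 zero_le_one) (sub_nonneg.2 ht₁.le) ht₀.le (by ring)
      _ < y := by rw [H_one]; nlinarith

lemma exists_rate_lt {β γ κ₀ : ℝ} (hβ : 0 < β) (hγ : 0 < γ) (h : γ * Hminusinv (β / γ) < κ₀) :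
    ∃ κ η : ℝ, 0 < κ ∧ κ < κ₀ ∧ 0 < η ∧ η < 1 ∧
      γ * (1 + η) * H (κ / (γ * (1 + η))) < β := by
  obtain ⟨x, hx, hxκ₀, hH⟩ := exists_H_lt (div_pos hβ hγ) ((lt_div_iff₀' hγ).2 h)
  have hcont : ContinuousAt (fun η : ℝ => γ * (1 + η) * H (γ * x / (γ * (1 + η)))) 0 := by
    have hγη : ContinuousAt (fun η : ℝ => γ * (1 + η)) 0 := by fun_prop
    exact hγη.mul (continuous_H.continuousAt.comp
      (continuousAt_const.div hγη (by simpa using hγ.ne')))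
  have hrate : ∀ᶠ η in 𝓝[>] (0 : ℝ), γ * (1 + η) * H (γ * x / (γ * (1 + η))) < β := by
    refine (hcont.eventually_lt continuousAt_const ?_).filter_mono nhdsWithin_le_nhds
    rw [add_zero, mul_one, mul_div_cancel_left₀ x hγ.ne']
    exact (lt_div_iff₀' hγ).1 hH
  obtain ⟨η, hη, hη₀, hη₁⟩ := (hrate.and (Ioo_mem_nhdsGT (zero_lt_one' ℝ))).exists
  exact ⟨γ * x, η, by positivity, (lt_div_iff₀' hγ).1 hxκ₀, hη₀, hη₁, hη⟩

end Rate

section ConnectionRadius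

open Topology

lemma Model.alpha_mul_rhat_pow (M : Model d P) (hd : d ≠ 0) {γ : ℝ} (hγ : 0 ≤ γ) (n : ℕ) :
    M.α * rhat M γ n ^ d = γ * Real.log n / n := by
  have hα := M.α_pos
  have h : (0 : ℝ) ≤ γ * Real.log n / (M.α * n) :=
    div_nonneg (mul_nonneg hγ (Real.log_natCast_nonneg n)) (by positivity)
  rw [rhat, one_div, Real.rpow_inv_natCast_pow h hd]
  rcases eq_or_ne n 0 with rfl | hn
  · simp
  · field_simp

lemma Model.rhat_pos (M : Model d P) {γ : ℝ} (hγ : 0 < γ) {n : ℕ} (hn : 2 ≤ n) :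
    0 < rhat M γ n := by
  have hα := M.α_pos
  have hlog : 0 < Real.log n := Real.log_pos (by exact_mod_cast hn)
  unfold rhat
  positivity

lemma Model.rhat_le_rhat (M : Model d P) {γ : ℝ} (hγ : 0 ≤ γ) {n j : ℕ} (hn : 3 ≤ n)
    (hnj : n ≤ j) : rhat M γ j ≤ rhat M γ n := by
  have hα := M.α_pos
  have hexp : ∀ {i : ℕ}, 3 ≤ i → Real.exp 1 ≤ i := fun hi =>
    Real.exp_one_lt_three.le.trans (by exact_mod_cast hi)
  have hlog := Real.log_div_self_antitoneOn (hexp hn) (hexp (hn.trans hnj)) (Nat.cast_le.2 hnj)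
  unfold rhat
  refine Real.rpow_le_rpow (div_nonneg (mul_nonneg hγ (Real.log_natCast_nonneg j)) (by positivity))
    ?_ (by positivity)
  rw [mul_div_mul_comm, mul_div_mul_comm]
  gcongr

lemma Model.tendsto_alpha_mul_rhat_pow (M : Model d P) (hd : d ≠ 0) {γ : ℝ} (hγ : 0 ≤ γ) :
    Tendsto (fun n => M.α * rhat M γ n ^ d) atTop (𝓝 0) := by
  have h := (Real.isLittleO_log_id_atTop.tendsto_div_nhds_zero.const_mul γ).comp
    tendsto_natCast_atTop_atTop
  rw [mul_zero] at h
  exact h.congr fun n => by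
    rw [M.alpha_mul_rhat_pow hd hγ, Function.comp_apply, id, mul_div_assoc]

lemma eventually_const_mul_log_mul_rpow_le (C : ℝ) {s t : ℝ} (h : t < s) :
    ∀ᶠ x : ℝ in atTop, C * Real.log x * x ^ t ≤ x ^ s := by
  filter_upwards [((isLittleO_log_rpow_atTop (sub_pos.2 h)).const_mul_left C).bound one_pos,
    eventually_gt_atTop 0] with x hlog hx
  rw [one_mul, Real.norm_of_nonneg (by positivity : 0 ≤ x ^ (s - t))] at hlog
  calc C * Real.log x * x ^ t ≤ x ^ (s - t) * x ^ t := by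
        gcongr
        exact (le_abs_self _).trans hlog
    _ = x ^ s := by rw [← Real.rpow_add hx, sub_add_cancel]

lemma Model.eventually_volume_ball_le (M : Model d P) (hd : d ≠ 0) {γ ε s : ℝ} (hγ : 0 < γ)
    (hs : ε * d - 1 < s) : ∀ᶠ n : ℕ in atTop,
      volume.real (Metric.ball (0 : EuclideanSpace ℝ (Fin d)) (rhat M γ n * (n : ℝ) ^ ε)) ≤
        (n : ℝ) ^ s := by
  have hα := M.α_pos
  have : Nonempty (Fin d) := Fin.pos_iff_nonempty.1 (Nat.pos_of_ne_zero hd)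
  set v : ℝ := volume.real (Metric.ball (0 : EuclideanSpace ℝ (Fin d)) 1)
  filter_upwards [tendsto_natCast_atTop_atTop.eventually
    (eventually_const_mul_log_mul_rpow_le (γ / M.α * v) hs), eventually_ge_atTop 2]
    with n hn hn₂
  have hn₀ : (0 : ℝ) < n := by positivity
  have hr := M.rhat_pos hγ hn₂
  have hpow : rhat M γ n ^ d = γ / M.α * Real.log n / n := by
    rw [← mul_right_inj' hα.ne', M.alpha_mul_rhat_pow hd hγ.le]
    field_simp
  calc volume.real (Metric.ball (0 : EuclideanSpace ℝ (Fin d)) (rhat M γ n * (n : ℝ) ^ ε))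
      = (rhat M γ n * (n : ℝ) ^ ε) ^ d * v := by
        rw [Measure.real, Measure.addHaar_ball _ _ (by positivity), finrank_euclideanSpace_fin,
          ENNReal.toReal_mul, ENNReal.toReal_ofReal (by positivity), ← Measure.real]
    _ = γ / M.α * v * Real.log n * (n : ℝ) ^ (ε * d - 1) := by
        rw [mul_pow, hpow, ← Real.rpow_mul_natCast hn₀.le, Real.rpow_sub_one hn₀.ne']
        ring
    _ ≤ (n : ℝ) ^ s := hn

lemma eventually_apply_rpow_div_two_le {g : ℝ → ℝ} {c ε : ℝ}
    (hg : g =o[atTop] fun r : ℝ => r ^ (-c)) (hε : 0 < ε) :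
    ∀ᶠ x : ℝ in atTop, g (x ^ ε / 2) ≤ 2 ^ c * x ^ (-(c * ε)) := by
  have h := ((tendsto_rpow_atTop hε).atTop_div_const two_pos).eventually (hg.bound one_pos)
  filter_upwards [h, eventually_gt_atTop 0] with x hx hx₀
  calc g (x ^ ε / 2) ≤ 1 * ‖(x ^ ε / 2) ^ (-c)‖ := (le_abs_self _).trans hx
    _ = 2 ^ c * x ^ (-(c * ε)) := by
        rw [one_mul, Real.norm_of_nonneg (by positivity), Real.div_rpow (by positivity) two_pos.le,
          ← Real.rpow_mul hx₀.le, Real.rpow_neg two_pos.le, div_inv_eq_mul, mul_comm, mul_neg,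
          mul_comm c]

lemma Model.eventually_forall_commonNeighbour_le (M : Model d P) (hd : d ≠ 0) {c γ ε s : ℝ}
    (hg : M.g =o[atTop] fun r : ℝ => r ^ (-c)) (hγ : 0 < γ) (hε : 0 < ε) (hs : -1 < s)
    (hcε : -(c * ε) < s) (C : ℝ) : ∀ᶠ n : ℕ in atTop, ∀ m : ℕ, m ≤ C * n →
      M.α * rhat M γ n ^ d + m * (2 * M.g (rhat M γ n * (n : ℝ) ^ ε / (2 * rhat M γ n)) *
        (M.α * rhat M γ n ^ d)) ≤ (n : ℝ) ^ s := by
  have hcast := tendsto_natCast_atTop_atTop (R := ℝ)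
  filter_upwards [hcast.eventually (eventually_const_mul_log_mul_rpow_le (2 * γ) hs),
    hcast.eventually (eventually_const_mul_log_mul_rpow_le (2 * (C * (2 * 2 ^ c) * γ)) hcε),
    hcast.eventually (eventually_apply_rpow_div_two_le hg hε), eventually_ge_atTop 2]
    with n hself hcommon hgn hn₂ m hm
  have : (0 : ℝ) < n := by positivity
  have hr := M.rhat_pos hγ hn₂
  have hg₀ : 0 ≤ M.g ((n : ℝ) ^ ε / 2) := (M.g_mem _ (by positivity)).1
  have := Real.log_natCast_nonneg n
  have hC : 0 ≤ C * n := m.cast_nonneg.trans hm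
  rw [show rhat M γ n * (n : ℝ) ^ ε / (2 * rhat M γ n) = (n : ℝ) ^ ε / 2 by field_simp,
    M.alpha_mul_rhat_pow hd hγ.le]
  calc γ * Real.log n / n + m * (2 * M.g ((n : ℝ) ^ ε / 2) * (γ * Real.log n / n))
      ≤ γ * Real.log n / n +
          C * n * (2 * (2 ^ c * (n : ℝ) ^ (-(c * ε))) * (γ * Real.log n / n)) := by
        gcongr
    _ = (2 * γ * Real.log n * (n : ℝ) ^ (-1 : ℝ) +
          2 * (C * (2 * 2 ^ c) * γ) * Real.log n * (n : ℝ) ^ (-(c * ε))) / 2 := by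
        rw [Real.rpow_neg_one]
        field_simp
    _ ≤ (n : ℝ) ^ s := by linarith

lemma Model.eventually_rpow_le_choose_mul (M : Model d P) (hd : d ≠ 0) {ι : Type*} {f : Filter ι}
    {n m : ι → ℕ} {μ γ κ β : ℝ} (hμ : 0 < μ) (hγ : 0 < γ) (hκ : 0 < κ)
    (hn : Tendsto n f atTop) (hm : Tendsto (fun k => (m k : ℝ) / n k) f (𝓝 μ))
    (hβ : γ * μ * H (κ / (γ * μ)) < β) :
    ∀ᶠ k in f, (n k : ℝ) ^ (-β) ≤ ((m k - 1).choose ⌊κ * Real.log (n k)⌋₊ : ℝ) *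
      (M.α * rhat M γ (n k) ^ d) ^ ⌊κ * Real.log (n k)⌋₊ *
        (1 - M.α * rhat M γ (n k) ^ d) ^ (m k - 1 - ⌊κ * Real.log (n k)⌋₊) := by
  have hlog : Tendsto (fun k => Real.log (n k)) f atTop :=
    Real.tendsto_log_atTop.comp (tendsto_natCast_atTop_atTop.comp hn)
  have hmean : Tendsto (fun k => m k * (M.α * rhat M γ (n k) ^ d) / Real.log (n k)) f
      (𝓝 (γ * μ)) := by
    refine (hm.const_mul γ).congr' ((hlog.eventually_gt_atTop 0).mono fun k hk => ?_)
    simp only [M.alpha_mul_rhat_pow hd hγ.le]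
    field_simp
  filter_upwards [eventually_exp_neg_mul_le_choose_mul (mul_pos hγ hμ) hκ hlog
    ((M.tendsto_alpha_mul_rhat_pow hd hγ.le).comp hn) hmean
    ((tendsto_nat_floor_mul_div_atTop hκ.le).comp hlog) hβ, hn.eventually_gt_atTop 0] with k hk hnk
  rwa [Real.rpow_def_of_pos (by exact_mod_cast hnk), mul_comm, neg_mul]

end ConnectionRadius

section LowDegreeBound

open Topology

variable [IsProbabilityMeasure P]

-- With `R = r n^ε` the two error terms are `n^(εd - 1)` and `n^(-εc)` up to logarithms;
-- `ε = 1 / (c + d)` makes both exponents equal to `-c / (c + d)`.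
lemma Model.eventually_measureReal_biInter_lowDegree_compl_le (M : Model d P) (hd : d ≠ 0)
    {c : ℝ} (hc : 0 < c) (hg : M.g =o[atTop] fun r : ℝ => r ^ (-c)) {ι : Type*} {f : Filter ι}
    {n m : ι → ℕ} {μ γ κ β δ : ℝ} (hμ : 0 < μ) (hγ : 0 < γ) (hκ : 0 < κ) (hδ : 0 ≤ δ)
    (hn : Tendsto n f atTop) (hnm : ∀ k, n k ≤ m k)
    (hm : Tendsto (fun k => (m k : ℝ) / n k) f (𝓝 μ))
    (hβ : γ * μ * H (κ / (γ * μ)) < β) (hβδ : β + δ < c / (c + d)) :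
    ∀ᶠ k in f, P.real (⋂ i ∈ Finset.Icc 1 (n k / 2),
        (M.lowDegree (rhat M γ (n k)) (m k) ⌊κ * Real.log (n k)⌋₊ i)ᶜ) ≤
      9 * (n k : ℝ) ^ (-δ) := by
  have hcd : c / (c + d) < 1 := by
    rw [div_lt_one (by positivity)]
    exact lt_add_of_pos_right c (by positivity)
  have hvol : 1 / (c + d) * d - 1 = -(c / (c + d)) := by field_simp; ring
  have hgc : -(c * (1 / (c + d))) = -(c / (c + d)) := by ring
  filter_upwards [hn.eventually_ge_atTop 2, hm.eventually_lt_const (lt_add_one μ),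
    M.eventually_rpow_le_choose_mul hd hμ hγ hκ hn hm hβ,
    hn.eventually ((M.tendsto_alpha_mul_rhat_pow hd hγ.le).eventually_le_const one_pos),
    hn.eventually (M.eventually_volume_ball_le hd hγ
      (hvol.trans_lt (neg_lt_neg hβδ))),
    hn.eventually (M.eventually_forall_commonNeighbour_le hd hg hγ
      (by positivity) (neg_lt_neg (hβδ.trans hcd)) (hgc.trans_lt (neg_lt_neg hβδ)) (μ + 1))]
    with k hn₂ hmk hL ha hball hcommon
  have hn₁ : (1 : ℝ) ≤ n k := by exact_mod_cast one_le_two.trans hn₂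
  have hn₀ : (0 : ℝ) < n k := by linarith
  have hr := M.rhat_pos hγ hn₂
  have hθL : (n k : ℝ) ^ (-(β + δ)) = (n k : ℝ) ^ (-δ) * (n k : ℝ) ^ (-β) := by
    rw [← Real.rpow_add hn₀, neg_add_rev]
  have hfirst : 1 / ((n k / 2 : ℕ) * (n k : ℝ) ^ (-β)) ≤ 4 * (n k : ℝ) ^ (-δ) := by
    have hquarter : (n k : ℝ) / 4 ≤ (n k / 2 : ℕ) := by
      rw [div_le_iff₀' four_pos]
      exact_mod_cast (by omega : n k ≤ 4 * (n k / 2))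
    calc 1 / ((n k / 2 : ℕ) * (n k : ℝ) ^ (-β)) ≤ 1 / (n k / 4 * (n k : ℝ) ^ (-β)) := by gcongr
      _ = 4 * (n k : ℝ) ^ (β - 1) := by
          rw [Real.rpow_sub_one hn₀.ne', Real.rpow_neg hn₀.le]
          field_simp
      _ ≤ 4 * (n k : ℝ) ^ (-δ) := by
          gcongr
          linarith
  have hmain := M.measureReal_biInter_lowDegree_compl_le hr
    (R := rhat M γ (n k) * (n k : ℝ) ^ (1 / (c + d))) (by positivity)
    (by omega) ((Nat.div_le_self _ 2).trans (hnm k)) (by positivity) (by positivity)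
    (Real.rpow_le_one_of_one_le_of_nonpos hn₁ (neg_nonpos.2 hδ)) ha hL (hball.trans_eq hθL)
    ((hcommon _ ((div_lt_iff₀ hn₀).1 hmk).le).trans_eq hθL)
  linarith

end LowDegreeBound

section AlmostSure

open Topology

lemma Model.minDeg_le_of_mem_lowDegree (M : Model d P) {j m K i : ℕ} {r s : ℝ} (hs : 0 < s)
    (hsr : s ≤ r) {ω : Ω} (hm : M.N j ω ≤ m) (hi : 1 ≤ i) (hiN : i ≤ M.N j ω)
    (hlow : ω ∈ M.lowDegree r m K i) : minDeg M j s ω ≤ K := by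
  classical
  have hdeg : deg M j s ω i ≤ M.nbrCount r ((Finset.Icc 1 m).erase i) i ω := by
    unfold deg Model.nbrCount
    rw [← Set.ncard_coe_finset]
    refine Set.ncard_le_ncard ?_ (Finset.finite_toSet _)
    rintro k ⟨hik, -, hk₁, -, hkN, hU⟩
    rw [Finset.mem_coe, Finset.mem_filter, Finset.mem_erase, Finset.mem_Icc]
    have hdist : 0 ≤ torusDist (M.X i ω) (M.X k ω) := torusDist_nonneg _ _
    refine ⟨⟨hik.symm, hk₁, hkN.trans hm⟩, hU.trans (M.g_antitone ?_ ?_ ?_)⟩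
    · exact div_nonneg hdist (hs.le.trans hsr)
    · exact div_nonneg hdist hs.le
    · gcongr
  have hmin : minDeg M j s ω ≤ deg M j s ω i := Nat.sInf_le ⟨i, hi, hiN, rfl⟩
  exact hmin.trans (hdeg.trans (Nat.lt_succ_iff.1 hlow))

lemma Model.minDeg_rhat_le_of_mem_lowDegree (M : Model d P) {γ κ : ℝ} (hγ : 0 < γ) (hκ : 0 ≤ κ)
    {n j m i : ℕ} (hn : 3 ≤ n) (hnj : n ≤ j) {ω : Ω} (hm : M.N j ω ≤ m) (hi : 1 ≤ i)
    (hiN : i ≤ M.N j ω) (hlow : ω ∈ M.lowDegree (rhat M γ n) m ⌊κ * Real.log n⌋₊ i) :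
    (minDeg M j (rhat M γ j) ω : ℝ) ≤ κ * Real.log j := by
  have hmin := M.minDeg_le_of_mem_lowDegree (M.rhat_pos hγ (by omega : 2 ≤ j))
    (M.rhat_le_rhat hγ.le hn hnj) hm hi hiN hlow
  have := Real.log_natCast_nonneg n
  calc (minDeg M j (rhat M γ j) ω : ℝ) ≤ (⌊κ * Real.log n⌋₊ : ℝ) := by exact_mod_cast hmin
    _ ≤ κ * Real.log n := Nat.floor_le (by positivity)
    _ ≤ κ * Real.log j := by gcongr

lemma eventually_exists_pow_le_lt_pow {b : ℕ} (hb : b ≠ 0) {Q : ℕ → Prop}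
    (hQ : ∀ᶠ k in atTop, Q k) : ∀ᶠ j in atTop, ∃ k, k ^ b ≤ j ∧ j < (k + 1) ^ b ∧ Q k := by
  obtain ⟨k₀, hk₀⟩ := eventually_atTop.1 hQ
  filter_upwards [eventually_ge_atTop (k₀ ^ b)] with j hj
  have hex : ∃ k, j < (k + 1) ^ b := ⟨j, (Nat.lt_succ_self j).trans_le (Nat.le_self_pow hb _)⟩
  have hlt := Nat.find_spec hex
  refine ⟨Nat.find hex, ?_, hlt, hk₀ _ (Nat.lt_succ_iff.1
    (lt_of_pow_lt_pow_left₀ b (Nat.zero_le _) (hj.trans_lt hlt)))⟩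
  rcases h : Nat.find hex with _ | k
  · simp [hb]
  · exact not_lt.1 (Nat.find_min hex (h ▸ Nat.lt_succ_self k))

lemma tendsto_natCeil_mul_succ_pow_div {b : ℕ} (hb : b ≠ 0) {μ : ℝ} (hμ : 0 ≤ μ) :
    Tendsto (fun k : ℕ => (⌈μ * ((k + 1) ^ b : ℕ)⌉₊ : ℝ) / ((k ^ b : ℕ) : ℝ)) atTop (𝓝 μ) := by
  have hsucc : Tendsto (fun k : ℕ => (((k + 1) ^ b : ℕ) : ℝ)) atTop atTop :=
    tendsto_natCast_atTop_atTop.comp ((tendsto_pow_atTop hb).comp (tendsto_add_atTop_nat 1))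
  have hratio : Tendsto (fun k : ℕ => (1 + 1 / (k : ℝ)) ^ b) atTop (𝓝 1) := by
    simpa using (tendsto_one_div_atTop_nhds_zero_nat.const_add (1 : ℝ)).pow b
  have h := ((tendsto_nat_ceil_mul_div_atTop hμ).comp hsucc).mul hratio
  rw [mul_one] at h
  refine h.congr' ((eventually_gt_atTop 0).mono fun k hk => ?_)
  have hk₀ : (0 : ℝ) < k := by exact_mod_cast hk
  rw [Function.comp_apply, one_add_div hk₀.ne', div_pow]
  push_cast
  field_simp

lemma ae_eventually_notMem_of_measureReal_le [IsFiniteMeasure P] {s : ℕ → Set Ω} {u : ℕ → ℝ}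
    (hu : Summable u) (h : ∀ᶠ k in atTop, P.real (s k) ≤ u k) :
    ∀ᵐ ω ∂P, ∀ᶠ k in atTop, ω ∉ s k := by
  have hs : Summable fun k => P.real (s k) :=
    hu.of_norm_bounded_eventually_nat <| h.mono fun k hk => by
      rwa [Real.norm_of_nonneg measureReal_nonneg]
  exact ae_eventually_notMem (by simpa using hs.tsum_ofReal_ne_top)

variable [IsProbabilityMeasure P]

lemma Model.ae_eventually_N_mem_Ioo (M : Model d P) {η : ℝ} (hη : 0 < η) (hη₂ : η ≤ 2) :
    ∀ᵐ ω ∂P, ∀ᶠ n : ℕ in atTop, (M.N n ω : ℝ) ∈ Set.Ioo ((1 - η) * n) ((1 + η) * n) := by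
  have hsum : Summable fun n : ℕ => Real.exp (-(n * (η ^ 2 / 4))) := by
    simpa only [mul_neg] using Real.summable_exp_nat_mul_iff.2
      (neg_lt_zero.2 (by positivity : 0 < η ^ 2 / 4))
  filter_upwards [
    ae_eventually_notMem_of_measureReal_le hsum
      (Eventually.of_forall (M.measureReal_N_le_one_sub_mul_le hη.le hη₂)),
    ae_eventually_notMem_of_measureReal_le hsum
      (Eventually.of_forall (M.measureReal_one_add_mul_le_N_le hη.le hη₂))] with ω hlower hupper
  filter_upwards [hlower, hupper] with n hl hu
  exact ⟨not_le.1 hl, not_le.1 hu⟩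

lemma Model.exists_ae_eventually_exists_mem_lowDegree (M : Model d P) (hd : d ≠ 0)
    {c : ℝ} (hc : 0 < c) (hg : M.g =o[atTop] fun r : ℝ => r ^ (-c)) {γ κ μ : ℝ} (hμ : 1 ≤ μ)
    (hγ : 0 < γ) (hκ : 0 < κ) (hrate : γ * μ * H (κ / (γ * μ)) < c / (c + d)) :
    ∃ b ≠ 0, ∀ᵐ ω ∂P, ∀ᶠ k in atTop, ∃ i ∈ Finset.Icc 1 (k ^ b / 2),
      ω ∈ M.lowDegree (rhat M γ (k ^ b)) ⌈μ * ((k + 1) ^ b : ℕ)⌉₊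
        ⌊κ * Real.log (k ^ b : ℕ)⌋₊ i := by
  obtain ⟨β, hβ, hβc⟩ := exists_between hrate
  obtain ⟨δ, hδ, hδβ⟩ := exists_between (sub_pos.2 hβc)
  obtain ⟨b, hb⟩ := exists_nat_gt (1 / δ)
  have hbδ : 1 < b * δ := (div_lt_iff₀ hδ).1 hb
  have hb₀ : b ≠ 0 := by
    rintro rfl
    norm_num at hbδ
  have hle : ∀ k : ℕ, k ^ b ≤ ⌈μ * ((k + 1) ^ b : ℕ)⌉₊ := fun k => by
    have hceil : (((k + 1) ^ b : ℕ) : ℝ) ≤ ⌈μ * ((k + 1) ^ b : ℕ)⌉₊ :=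
      (le_mul_of_one_le_left (Nat.cast_nonneg _) hμ).trans (Nat.le_ceil _)
    exact (Nat.pow_le_pow_left k.le_succ b).trans (by exact_mod_cast hceil)
  have hprob := M.eventually_measureReal_biInter_lowDegree_compl_le hd hc hg (by linarith) hγ hκ
    hδ.le (tendsto_pow_atTop hb₀) hle (tendsto_natCeil_mul_succ_pow_div hb₀ (by linarith)) hβ
    (lt_sub_iff_add_lt'.1 hδβ)
  have hsum : Summable fun k : ℕ => 9 * ((k ^ b : ℕ) : ℝ) ^ (-δ) := by
    refine ((Real.summable_nat_rpow.2 (neg_lt_neg hbδ)).mul_left 9).congr fun k => ?_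
    rw [Nat.cast_pow, ← Real.rpow_natCast_mul k.cast_nonneg, mul_neg]
  refine ⟨b, hb₀, (ae_eventually_notMem_of_measureReal_le hsum hprob).mono fun ω hω =>
    hω.mono fun k hk => ?_⟩
  simpa only [Set.mem_iInter, Set.mem_compl_iff, not_forall, not_not, exists_prop] using hk

lemma Model.ae_eventually_minDeg_le (M : Model d P) (hd : d ≠ 0) {c : ℝ} (hc : 0 < c)
    (hg : M.g =o[atTop] fun r : ℝ => r ^ (-c)) {γ κ₀ : ℝ} (hγ : 0 < γ)
    (hκ₀ : γ * Hminusinv (c / (γ * (c + d))) < κ₀) :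
    ∀ᵐ ω ∂P, ∀ᶠ j : ℕ in atTop, (minDeg M j (rhat M γ j) ω : ℝ) ≤ κ₀ * Real.log j := by
  rw [mul_comm γ (c + d), ← div_div] at hκ₀
  obtain ⟨κ, η, hκ, hκκ₀, hη, hη₁, hrate⟩ := exists_rate_lt (by positivity) hγ hκ₀
  obtain ⟨b, hb, hlow⟩ := M.exists_ae_eventually_exists_mem_lowDegree hd hc hg
    (by linarith : 1 ≤ 1 + η) hγ hκ hrate
  filter_upwards [hlow, M.ae_eventually_N_mem_Ioo hη (by linarith),
    M.ae_eventually_N_mem_Ioo (by norm_num : (0 : ℝ) < 1 / 2) (by norm_num)] with ω hω hupper hlower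
  filter_upwards [eventually_exists_pow_le_lt_pow hb (hω.and (eventually_ge_atTop 3)),
    hupper, hlower] with j ⟨k, hkj, hjk, ⟨i, hi, hik⟩, hk⟩ hup hlo
  rw [Finset.mem_Icc] at hi
  have hNm : M.N j ω ≤ ⌈(1 + η) * ((k + 1) ^ b : ℕ)⌉₊ := by
    have hjk' : (j : ℝ) ≤ ((k + 1) ^ b : ℕ) := by exact_mod_cast hjk.le
    have hN : (M.N j ω : ℝ) ≤ (1 + η) * ((k + 1) ^ b : ℕ) := hup.2.le.trans (by gcongr)
    exact_mod_cast hN.trans (Nat.le_ceil _)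
  have hiN : i ≤ M.N j ω := by
    have hij : (i : ℝ) ≤ j / 2 :=
      (Nat.cast_le.2 (hi.2.trans (Nat.div_le_div_right hkj))).trans Nat.cast_div_le
    have hjN : (j : ℝ) / 2 ≤ M.N j ω := by linarith [hlo.1]
    exact_mod_cast hij.trans hjN
  calc (minDeg M j (rhat M γ j) ω : ℝ) ≤ κ * Real.log j :=
        M.minDeg_rhat_le_of_mem_lowDegree hγ hκ.le (hk.trans (Nat.le_self_pow hb k)) hkj hNm hi.1
          hiN hik
    _ ≤ κ₀ * Real.log j := by gcongr

end AlmostSure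

theorem minDeg_limsup_le_general (hd : d ≠ 0) [IsProbabilityMeasure P] (M : Model d P)
    {c : ℝ} (hc : 0 < c) (hg : M.g =o[atTop] fun r : ℝ => r ^ (-c)) {γ : ℝ} (hγ : 0 < γ) :
    ∀ᵐ ω ∂P, Filter.limsup
      (fun n : ℕ => (minDeg M n (rhat M γ n) ω : ℝ) / Real.log n) atTop
        ≤ γ * Hminusinv (c / (γ * (c + d))) := by
  set y := γ * Hminusinv (c / (γ * (c + d)))
  have h : ∀ᵐ ω ∂P, ∀ p : ℕ, ∀ᶠ n : ℕ in atTop,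
      (minDeg M n (rhat M γ n) ω : ℝ) ≤ (y + 1 / ((p : ℝ) + 1)) * Real.log n :=
    ae_all_iff.2 fun p => M.ae_eventually_minDeg_le hd hc hg hγ
      (lt_add_of_pos_right _ Nat.one_div_pos_of_nat)
  filter_upwards [h] with ω hω
  have hlim : Tendsto (fun p : ℕ => y + 1 / ((p : ℝ) + 1)) atTop (nhds y) := by
    simpa using tendsto_one_div_add_atTop_nhds_zero_nat.const_add y
  refine ge_of_tendsto' hlim fun p => limsup_le_of_le ?_ ?_
  · exact IsBoundedUnder.isCoboundedUnder_le (isBoundedUnder_of ⟨0, fun n =>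
      div_nonneg (Nat.cast_nonneg _) (Real.log_natCast_nonneg n)⟩)
  · filter_upwards [hω p, eventually_ge_atTop 2] with n hn hn₂
    exact (div_le_iff₀ (Real.log_pos (by exact_mod_cast hn₂))).2 hn

/-- Theorem 4(iv): for `γ > (c-3d)/(c-d)`, a.s.
`limsup δ_n/log n ≤ γ H₋⁻¹((c-3d)/(γ(c-d)))`. -/
theorem minDeg_limsup_le (hd : 2 ≤ d) [IsProbabilityMeasure P] (M : Model d P)
    {c : ℝ} (hc : (3 : ℝ) * d < c)
    (hg : M.g =o[atTop] fun r : ℝ => r ^ (-c))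
    {γ : ℝ} (hγ : (c - 3 * d) / (c - d) < γ) :
    ∀ᵐ ω ∂P, Filter.limsup
      (fun n : ℕ => (minDeg M n (rhat M γ n) ω : ℝ) / Real.log n) atTop
        ≤ γ * Hminusinv ((c - 3 * d) / (γ * (c - d))) := by
  have hγ₀ : 0 < γ := by
    have : (0 : ℝ) ≤ d := d.cast_nonneg
    exact (div_pos (by linarith) (by linarith)).trans hγ
  have hc₀ : 0 < c := (by positivity : (0 : ℝ) ≤ 3 * d).trans_lt hc
  exact (minDeg_limsup_le_general (by omega) M hc₀ hg hγ₀).mono fun ω hω =>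
    hω.trans (by gcongr; exact Hminusinv_div_add_le_Hminusinv_div_sub d.cast_nonneg hc.le hγ₀)

end RCM
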